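/- arXiv:1610.09754 — 2 statements merged into one kernel-verified Lean document; each statement's English description precedes it below -/
import Mathlib

section
/- Let d be a positive integer and q a prime power with q ≡ 1 (mod d). Set t = (q-1)/d and let T be a generator of the character group of F_q^×. Then for any integer j, g(T^{dj}) = (∏_{i=0}^{d-1} g(T^{it+j})) / (T^{-dj}(d) · ∏_{i=1}^{d-1} g(T^{it})), provided the denominator is nonzero. -/
/-!
Write `q` for the cardinality of `F`, `χ = T ^ t` (a character whose kernel on `Fˣ` is the group of
`d`-th powers) and `η = T ^ j`. The theorem is the Hasse–Davenport product relation
`∏_{i < d} g(χ ^ i η) = (∏_{0 < i < d} g(χ ^ i)) · η ^ d (d⁻¹) · g(η ^ d)`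
(`hasse_davenport_product`), which is proved by comparing two L-functions over `F[X]`.

Extend `ψ` to an additive character `Ψ` of an algebraic closure. For a multiplicative character `θ`
and an exponent `m`, weigh a monic polynomial `f` with roots `α₁, …, αₙ` by
`θ(α₁ ⋯ αₙ) Ψ(α₁ ^ m + ⋯ + αₙ ^ m)` (`gaussWeight`). This weight is completely multiplicative, and
its generating series over monic polynomials by degree (`lSeries`) has a logarithmic derivative
whose `k`-th coefficient is `∑ θ(N x) ψ(Tr (x ^ m))`, `x` running over the extension of `F` of
degree `k + 1` (`lSeries_log_deriv`, `gaussWeight_galPoly`). This is the Euler product, in the form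
of a count of the elements whose characteristic polynomial divides a given `f` (`count_galPoly`).

* For `m = 1` the series is `1 + g(θ) X` (`lSeries_one_eq`).
* For `m = d` and the character `η ^ d`, grouping the `x` according to `x ^ d` turns the logarithmic
  derivative into the sum over `i < d` of those attached to `χ ^ i η` and `m = 1` (`sum_fiber`). So
  the series equals `∏_{i < d} (1 + g(χ ^ i η) X)` (`lSeries_pow_eq_prod`).
* The coefficient of `X ^ d` in that series can also be computed directly: by the Newton identities,
  adding `a` to the constant coefficient of a monic polynomial of degree `d` changes the `d`-th power
  sum of the roots by `-d a`, so the coefficient is `D · η ^ d (d⁻¹) · g(η ^ d)` with a constant `D`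
  not depending on `η` (`coeff_lSeries_top`).

Comparing the coefficients of `X ^ d` gives the relation up to the constant `D`, and `η = 1`
identifies `D` with `∏_{0 < i < d} g(χ ^ i)`.
-/

/-! ### Power series with a prescribed logarithmic derivative -/

theorem ps_log_deriv_prod {ι : Type*} (s : Finset ι) (C L : ι → PowerSeries ℂ)
    (h : ∀ i ∈ s, PowerSeries.derivative ℂ (C i) = L i * C i) :
    PowerSeries.derivative ℂ (∏ i ∈ s, C i) = (∑ i ∈ s, L i) * ∏ i ∈ s, C i := by
  classical
  induction s using Finset.induction_on with
  | empty => simp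
  | insert a s ha ih =>
    rw [Finset.prod_insert ha, Finset.sum_insert ha, Derivation.leibniz,
      ih fun i hi => h i (Finset.mem_insert_of_mem hi), h a (Finset.mem_insert_self a s)]
    simp only [smul_eq_mul]
    ring

/-- A power series over `ℂ` is determined by its constant coefficient and its logarithmic derivative. -/
theorem ps_log_deriv_unique {C D L : PowerSeries ℂ}
    (hC : PowerSeries.derivative ℂ C = L * C) (hD : PowerSeries.derivative ℂ D = L * D)
    (h0 : PowerSeries.coeff 0 C = PowerSeries.coeff 0 D) : C = D := by
  ext n
  induction n using Nat.strong_induction_on with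
  | _ n ih =>
    cases n with
    | zero => exact h0
    | succ n =>
      have h1 := congrArg (PowerSeries.coeff n) hC
      have h2 := congrArg (PowerSeries.coeff n) hD
      rw [PowerSeries.coeff_derivative, PowerSeries.coeff_mul] at h1 h2
      have h3 : (PowerSeries.coeff (n + 1) C) * ((n : ℂ) + 1)
          = (PowerSeries.coeff (n + 1) D) * ((n : ℂ) + 1) := by
        rw [h1, h2]
        refine Finset.sum_congr rfl fun a ha => ?_
        rw [ih a.2 (by have := Finset.HasAntidiagonal.mem_antidiagonal.1 ha; omega)]
      exact mul_right_cancel₀ (by exact_mod_cast n.succ_ne_zero) h3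

/-! ### Power sums of roots and the Newton identities -/

section Newton
variable {K : Type*} [Field K]

/-- If two families have the same elementary symmetric functions below degree `m`, then the Newton
identities express the difference of their `m`-th power sums through that of their `m`-th elementary
symmetric functions alone. -/
theorem newton_shift {n : ℕ} (v w : Fin n → K) (m : ℕ) (hm : 0 < m)
    (h : ∀ i < m, (Finset.univ.val.map v).esymm i = (Finset.univ.val.map w).esymm i) :
    (∑ i, v i ^ m) - ∑ i, w i ^ m = (-1) ^ (m + 1) * m *
      ((Finset.univ.val.map v).esymm m - (Finset.univ.val.map w).esymm m) := by
  -- the Newton identity, evaluated at a family of elements of `K`.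
  have key : ∀ (u : Fin n → K) (k : ℕ), 0 < k → ∑ i, u i ^ k =
      (-1) ^ (k + 1) * k * (Finset.univ.val.map u).esymm k -
      ∑ a ∈ Finset.HasAntidiagonal.antidiagonal k with a.1 ∈ Set.Ioo 0 k,
        (-1) ^ a.1 * (Finset.univ.val.map u).esymm a.1 * ∑ i, u i ^ a.2 := by
    intro u k hk
    have := congrArg (MvPolynomial.aeval u)
      (MvPolynomial.psum_eq_mul_esymm_sub_sum (Fin n) K k hk)
    simpa only [MvPolynomial.psum, map_sub, map_mul, map_sum, map_pow, map_neg, map_one,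
      map_natCast, MvPolynomial.aeval_X, MvPolynomial.aeval_esymm_eq_multiset_esymm] using this
  have low : ∀ k < m, ∑ i, v i ^ k = ∑ i, w i ^ k := by
    intro k
    induction k using Nat.strong_induction_on with
    | _ k ih =>
      intro hk
      rcases Nat.eq_zero_or_pos k with rfl | hk0
      · simp
      rw [key v k hk0, key w k hk0, h k hk]
      congr 1
      refine Finset.sum_congr rfl fun a ha => ?_
      simp only [Finset.mem_filter, Finset.HasAntidiagonal.mem_antidiagonal, Set.mem_Ioo] at ha
      rw [h a.1 (by omega), ih a.2 (by omega) (by omega)]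
  rw [key v m hm, key w m hm]
  have : ∑ a ∈ Finset.HasAntidiagonal.antidiagonal m with a.1 ∈ Set.Ioo 0 m,
        (-1) ^ a.1 * (Finset.univ.val.map v).esymm a.1 * ∑ i, v i ^ a.2 =
      ∑ a ∈ Finset.HasAntidiagonal.antidiagonal m with a.1 ∈ Set.Ioo 0 m,
        (-1) ^ a.1 * (Finset.univ.val.map w).esymm a.1 * ∑ i, w i ^ a.2 := by
    refine Finset.sum_congr rfl fun a ha => ?_
    simp only [Finset.mem_filter, Finset.HasAntidiagonal.mem_antidiagonal, Set.mem_Ioo] at ha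
    rw [h a.1 (by omega), low a.2 (by omega)]
  rw [this]
  ring

end Newton

section PowerSum
open Polynomial
variable {F : Type*} [Field F]

/-- The sum of the `m`-th powers of the roots of `f` in an algebraic closure of `F`, counted with
multiplicity. -/
noncomputable def rootPowerSum (m : ℕ) (f : F[X]) : AlgebraicClosure F :=
  ((f.aroots (AlgebraicClosure F)).map (· ^ m)).sum

theorem rootPowerSum_mul (m : ℕ) {f g : F[X]} (hf : f.Monic) (hg : g.Monic) :
    rootPowerSum m (f * g) = rootPowerSum m f + rootPowerSum m g := by
  rw [rootPowerSum, aroots_mul (mul_ne_zero hf.ne_zero hg.ne_zero)]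
  simp [rootPowerSum]

theorem exists_roots_fn {f : F[X]} : ∃ v : Fin f.natDegree → AlgebraicClosure F,
    f.aroots (AlgebraicClosure F) = Finset.univ.val.map v := by
  have hc : (f.aroots (AlgebraicClosure F)).card = f.natDegree := IsAlgClosed.card_aroots_eq_natDegree
  obtain ⟨l, hl⟩ := Quot.exists_rep (f.aroots (AlgebraicClosure F))
  have hl' : (l : Multiset (AlgebraicClosure F)) = f.aroots (AlgebraicClosure F) := hl
  rw [← hl'] at hc ⊢
  have hlen : l.length = f.natDegree := by simpa using hc
  refine ⟨fun i => l.get (i.cast hlen.symm), ?_⟩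
  rw [Fin.univ_val_map, Multiset.coe_eq_coe]
  refine List.Perm.of_eq (List.ext_get (by simp [hlen]) fun i h1 h2 => by simp)

/-- The Vieta formula. -/
theorem coeff_aroots {f : F[X]} (hf : f.Monic) {k : ℕ} (hk : k ≤ f.natDegree) :
    (f.aroots (AlgebraicClosure F)).esymm k =
      (-1) ^ k * algebraMap F (AlgebraicClosure F) (f.coeff (f.natDegree - k)) := by
  have hc : (f.aroots (AlgebraicClosure F)).card = f.natDegree := IsAlgClosed.card_aroots_eq_natDegree
  have h := coeff_eq_esymm_roots_of_card (p := f.map (algebraMap F (AlgebraicClosure F)))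
    (by rw [natDegree_map]; exact hc) (k := f.natDegree - k) (by rw [natDegree_map]; omega)
  rw [natDegree_map, coeff_map, (hf.map _).leadingCoeff, one_mul, Nat.sub_sub_self hk] at h
  rw [h, ← mul_assoc, ← mul_pow]
  simp [aroots]

/-- For monic polynomials of the same degree which agree in the `m` highest places, the difference
of the `m`-th power sums of the roots is `-m` times the difference of the next coefficients. -/
theorem rootPowerSum_shift {f g : F[X]} (hf : f.Monic) (hg : g.Monic)
    (hfg : f.natDegree = g.natDegree) {m : ℕ} (hm : 0 < m) (hmn : m ≤ f.natDegree)
    (h : ∀ i < m, f.coeff (f.natDegree - i) = g.coeff (f.natDegree - i)) :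
    rootPowerSum m f = rootPowerSum m g - m * algebraMap F (AlgebraicClosure F)
      (f.coeff (f.natDegree - m) - g.coeff (f.natDegree - m)) := by
  obtain ⟨v, hv⟩ := exists_roots_fn (f := f)
  obtain ⟨w, hw⟩ := exists_roots_fn (f := g)
  obtain ⟨w', hw'⟩ : ∃ w' : Fin f.natDegree → AlgebraicClosure F,
      g.aroots (AlgebraicClosure F) = Finset.univ.val.map w' := by
    rw [hfg]; exact ⟨w, hw⟩
  have := newton_shift v w' m hm (by
    intro i hi
    rw [← hv, ← hw', coeff_aroots hf (by omega), coeff_aroots hg (by omega), h i hi, hfg])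
  rw [← hv, ← hw', coeff_aroots hf hmn, coeff_aroots hg (hfg ▸ hmn), ← hfg] at this
  have e1 : rootPowerSum m f = ∑ i, v i ^ m := by rw [rootPowerSum, hv, Multiset.map_map]; rfl
  have e2 : rootPowerSum m g = ∑ i, w' i ^ m := by rw [rootPowerSum, hw', Multiset.map_map]; rfl
  rw [e1, e2, map_sub]
  have h1 : ((-1 : AlgebraicClosure F)) ^ (m + 1) * (-1) ^ m = -1 := by
    rw [← pow_add]; exact Odd.neg_one_pow ⟨m, by ring⟩
  linear_combination this + (m * (algebraMap F (AlgebraicClosure F) (f.coeff (f.natDegree - m)) -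
    algebraMap F (AlgebraicClosure F) (g.coeff (f.natDegree - m)))) * h1
end PowerSum

/-! ### Characteristic polynomials of elements of a finite extension -/

section Galois
open Polynomial Module
variable (F : Type*) [Field F] [Fintype F] {E : Type*} [Field E] [Finite E] [Algebra F E]

omit [Fintype F] in
theorem exists_galPoly (x : E) : ∃ c : F[X], c.Monic ∧
    c.map (algebraMap F E) = ∏ σ : E ≃ₐ[F] E, (X - C (σ x)) := by
  have h := Algebra.IsInvariant.charpoly_mem_lifts F E (E ≃ₐ[F] E) x
  obtain ⟨c, hc, -, hm⟩ := lifts_and_degree_eq_and_monic h (MulSemiringAction.monic_charpoly _ x)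
  exact ⟨c, hm, hc⟩

/-- The characteristic polynomial over `F` of an element `x` of a finite extension `E`, encoded as
the descent to `F` of the product of `X - σ x` over all `σ` in the Galois group. -/
noncomputable def galPoly (x : E) : F[X] := (exists_galPoly F x).choose

omit [Fintype F] in
theorem galPoly_monic (x : E) : (galPoly F x).Monic := (exists_galPoly F x).choose_spec.1

omit [Fintype F] in
theorem map_galPoly (x : E) :
    (galPoly F x).map (algebraMap F E) = ∏ σ : E ≃ₐ[F] E, (X - C (σ x)) :=
  (exists_galPoly F x).choose_spec.2

omit [Fintype F] in
theorem natDegree_galPoly (x : E) : (galPoly F x).natDegree = finrank F E := by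
  rw [← natDegree_map (algebraMap F E), map_galPoly, natDegree_prod_of_monic _ _ fun σ _ => monic_X_sub_C _]
  simp only [natDegree_X_sub_C, Finset.sum_const, smul_eq_mul, mul_one, Finset.card_univ]
  rw [← Nat.card_eq_fintype_card, IsGalois.card_aut_eq_finrank]

omit [Fintype F] in
theorem galPoly_coeff_zero (x : E) :
    (-1) ^ (galPoly F x).natDegree * (galPoly F x).coeff 0 = Algebra.norm F x := by
  apply (algebraMap F E).injective
  rw [natDegree_galPoly, Algebra.norm_eq_prod_automorphisms, map_mul, ← coeff_map, map_galPoly,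
    coeff_zero_eq_eval_zero, eval_prod]
  simp only [eval_sub, eval_X, eval_C, zero_sub, map_pow, map_neg, map_one]
  rw [Finset.prod_neg, ← mul_assoc, Finset.card_univ, ← Nat.card_eq_fintype_card, IsGalois.card_aut_eq_finrank, ← mul_pow]
  simp

omit [Fintype F] in
theorem sum_aroots_galPoly (x : E) (m : ℕ) :
    (((galPoly F x).aroots (AlgebraicClosure F)).map (· ^ m)).sum =
      algebraMap F (AlgebraicClosure F) (Algebra.trace F E (x ^ m)) := by
  let φ : E →ₐ[F] AlgebraicClosure F := IsAlgClosed.lift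
  have h : (galPoly F x).aroots (AlgebraicClosure F)
      = (Finset.univ : Finset (E ≃ₐ[F] E)).val.map fun σ => φ (σ x) := by
    rw [aroots, ← φ.comp_algebraMap, ← Polynomial.map_map, map_galPoly, Polynomial.map_prod]
    simp only [Polynomial.map_sub, map_X, map_C]
    have h1 := roots_multiset_prod_X_sub_C
      ((Finset.univ : Finset (E ≃ₐ[F] E)).val.map fun σ => φ (σ x))
    rw [Multiset.map_map] at h1
    exact h1
  rw [h, Multiset.map_map, ← φ.commutes, trace_eq_sum_automorphisms, map_sum]
  simp only [map_pow]
  rfl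

omit [Fintype F] in
/-- All conjugates of `x` have the minimal polynomial of `x`, so it is the only irreducible factor of
`galPoly F x`. -/
theorem galPoly_eq_pow (x : E) :
    galPoly F x = minpoly F x ^ (finrank F E / (minpoly F x).natDegree) := by
  classical
  have hP := minpoly.irreducible (Algebra.IsIntegral.isIntegral (R := F) x)
  have hPm := minpoly.monic (Algebra.IsIntegral.isIntegral (R := F) x)
  have h : UniqueFactorizationMonoid.normalizedFactors (galPoly F x) =
      Multiset.replicate (UniqueFactorizationMonoid.normalizedFactors (galPoly F x)).card (minpoly F x) := by
    rw [Multiset.eq_replicate]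
    refine ⟨rfl, fun Q hQ => ?_⟩
    have hirr := UniqueFactorizationMonoid.irreducible_of_normalized_factor Q hQ
    have hdvd := UniqueFactorizationMonoid.dvd_of_mem_normalizedFactors hQ
    have hmon : Q.Monic := by
      have := UniqueFactorizationMonoid.normalize_normalized_factor Q hQ
      rw [← this]; exact monic_normalize hirr.ne_zero
    have hd2 : Q.map (algebraMap F E) ∣ ∏ σ : E ≃ₐ[F] E, (X - C (σ x)) := by
      rw [← map_galPoly]; exact Polynomial.map_dvd _ hdvd
    have hs : (Q.map (algebraMap F E)).Splits :=
      Splits.of_dvd (Splits.prod fun σ _ => Splits.X_sub_C _)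
        (Finset.prod_ne_zero_iff.2 fun σ _ => X_sub_C_ne_zero _) hd2
    obtain ⟨y, hy⟩ := hs.exists_eval_eq_zero (by
      rw [degree_map]; exact (degree_pos_of_irreducible hirr).ne')
    have hy2 := eval_eq_zero_of_dvd_of_eval_eq_zero hd2 hy
    rw [eval_prod, Finset.prod_eq_zero_iff] at hy2
    obtain ⟨σ, -, hσ⟩ := hy2
    have hyx : y = σ x := by simpa [sub_eq_zero] using hσ
    rw [minpoly.eq_of_irreducible_of_monic hirr (x := y) (by rwa [eval_map_algebraMap] at hy) hmon,
      hyx, minpoly.algEquiv_eq]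
  have h2 := UniqueFactorizationMonoid.prod_normalizedFactors_eq (galPoly_monic F x).ne_zero
  rw [h, Multiset.prod_replicate, (galPoly_monic F x).normalize_eq_self] at h2
  have h3 := congrArg natDegree h2
  rw [natDegree_pow, natDegree_galPoly] at h3
  rw [← h3, Nat.mul_div_cancel _ hP.natDegree_pos, h2]

/-- A monic irreducible polynomial `P` has `deg P` roots in `E` if `deg P` divides `[E : F]`, and none
otherwise. -/
theorem card_minpoly_eq [Fintype E] [DecidableEq F[X]] {P : F[X]} (hP : Irreducible P) (hm : P.Monic) :
    (Finset.univ.filter fun x : E => minpoly F x = P).card =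
      if P.natDegree ∣ finrank F E then P.natDegree else 0 := by
  classical
  split_ifs with h
  · rw [hP.natDegree_dvd_iff_dvd_X_pow_card_pow_sub_X, ← Module.natCard_eq_pow_finrank] at h
    have hsp : (P.map (algebraMap F E)).Splits := by
      refine Splits.of_dvd (Polynomial.splits_X_pow_nat_card_sub_X (K := E)) ?_ ?_
      · exact FiniteField.X_pow_card_sub_X_ne_zero _ Finite.one_lt_card
      · simpa using Polynomial.map_dvd (algebraMap F E) h
    have hsep : (P.map (algebraMap F E)).Separable := (PerfectField.separable_of_irreducible hP).map
    have : (Finset.univ.filter fun x : E => minpoly F x = P) = (P.map (algebraMap F E)).roots.toFinset := by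
      ext x
      simp only [Finset.mem_filter, Finset.mem_univ, true_and, Multiset.mem_toFinset]
      rw [mem_roots (map_ne_zero hm.ne_zero), IsRoot, eval_map_algebraMap]
      constructor
      · rintro rfl; exact minpoly.aeval F x
      · intro hx; exact (minpoly.eq_of_irreducible_of_monic hP hx hm).symm
    rw [this, Multiset.toFinset_card_of_nodup (nodup_roots hsep), ← hsp.natDegree_eq_card_roots,
      natDegree_map]
  · rw [Finset.card_eq_zero, Finset.filter_eq_empty_iff]
    rintro x - rfl
    exact h (minpoly.degree_dvd (Algebra.IsIntegral.isIntegral x))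

end Galois

/-! ### Counting the characteristic polynomials that divide a given polynomial -/

section Count
open Polynomial Module UniqueFactorizationMonoid
variable {F : Type*} [Field F] [Fintype F] (p : ℕ) [Fact p.Prime] [CharP F p]

noncomputable instance (k : ℕ) : Fintype (FiniteField.Extension F p (k + 1)) := Fintype.ofFinite _

/-- The multiples `k + 1 = e, 2 e, …, m e` of `e`, counted within the range `k < n`. -/
theorem card_multiples {e m n : ℕ} (he : 0 < e) (h : e * m ≤ n) :
    ((Finset.range n).filter fun k => e ∣ k + 1 ∧ (k + 1) / e ≤ m).card = m := by
  have : ((Finset.range n).filter fun k => e ∣ k + 1 ∧ (k + 1) / e ≤ m) =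
      (Finset.range m).image fun j => e * (j + 1) - 1 := by
    ext k
    simp only [Finset.mem_filter, Finset.mem_range, Finset.mem_image]
    constructor
    · rintro ⟨hk, ⟨c, hc⟩, hm⟩
      rw [hc, Nat.mul_div_cancel_left _ he] at hm
      have : c ≠ 0 := by rintro rfl; simp at hc
      refine ⟨c - 1, by omega, ?_⟩
      rw [Nat.sub_add_cancel (by omega)]; omega
    · rintro ⟨j, hj, rfl⟩
      have h1 : 0 < e * (j + 1) := by positivity
      have h2 : e * (j + 1) ≤ e * m := Nat.mul_le_mul_left _ hj
      rw [Nat.sub_add_cancel h1, Nat.mul_div_cancel_left _ he]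
      exact ⟨by omega, dvd_mul_right _ _, hj⟩
  rw [this, Finset.card_image_of_injective, Finset.card_range]
  intro a b hab
  have h1 : 0 < e * (a + 1) := by positivity
  have h2 : 0 < e * (b + 1) := by positivity
  have h3 : e * (a + 1) = e * (b + 1) := by simp only at hab; omega
  exact Nat.succ_injective (Nat.eq_of_mul_eq_mul_left he h3)

open Classical in
/-- The combinatorial content of the Euler product: the pairs `(k, x)` with `k < deg f` and `x` in
the extension of degree `k + 1` such that `galPoly F x` divides `f` are `deg f` in number. An
irreducible factor `P` of multiplicity `μ` contributes its `deg P` roots in the extensions of degree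
`deg P, 2 deg P, …, μ deg P`. -/
theorem count_galPoly {f : F[X]} (hf : f.Monic) :
    ∑ k ∈ Finset.range f.natDegree,
      (Finset.univ.filter fun x : FiniteField.Extension F p (k + 1) => galPoly F x ∣ f).card
      = f.natDegree := by
  set S := normalizedFactors f with hS
  have hirr : ∀ P ∈ S, Irreducible P := fun P hP => irreducible_of_normalized_factor P hP
  have hmon : ∀ P ∈ S, P.Monic := fun P hP => by
    rw [← normalize_normalized_factor P hP]; exact monic_normalize (hirr P hP).ne_zero
  have hdeg : (S.map natDegree).sum = f.natDegree := by
    have h2 := prod_normalizedFactors_eq hf.ne_zero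
    rw [hf.normalize_eq_self] at h2
    rw [← h2, natDegree_multiset_prod_of_monic _ hmon]
  have hdeg' : ∑ P ∈ S.toFinset, P.natDegree * S.count P = f.natDegree := by
    rw [← hdeg, Finset.sum_multiset_map_count]
    simp [mul_comm]
  -- Sort the `x` by minimal polynomial, using that `galPoly F x` is a power of it.
  have key : ∀ k, (Finset.univ.filter fun x : FiniteField.Extension F p (k + 1) =>
      galPoly F x ∣ f).card = ∑ P ∈ S.toFinset,
        if P.natDegree ∣ k + 1 ∧ (k + 1) / P.natDegree ≤ S.count P then P.natDegree else 0 := by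
    intro k
    have hpow : ∀ x : FiniteField.Extension F p (k + 1), galPoly F x ∣ f ↔
        (k + 1) / (minpoly F x).natDegree ≤ S.count (minpoly F x) := by
      intro x
      have hi := Algebra.IsIntegral.isIntegral (R := F) x
      rw [galPoly_eq_pow, FiniteField.finrank_extension,
        dvd_iff_normalizedFactors_le_normalizedFactors
          (pow_ne_zero _ (minpoly.ne_zero hi)) hf.ne_zero,
        normalizedFactors_pow, normalizedFactors_irreducible (minpoly.irreducible hi),
        (minpoly.monic hi).normalize_eq_self, Multiset.nsmul_singleton,
        ← Multiset.le_count_iff_replicate_le]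
    rw [Finset.card_eq_sum_card_fiberwise (f := fun x => minpoly F x) (t := S.toFinset)]
    · refine Finset.sum_congr rfl fun P hP => ?_
      rw [Multiset.mem_toFinset] at hP
      have hc := card_minpoly_eq F (E := FiniteField.Extension F p (k + 1)) (hirr P hP) (hmon P hP)
      rw [FiniteField.finrank_extension] at hc
      rw [Finset.filter_filter]
      by_cases h : (k + 1) / P.natDegree ≤ S.count P
      · simp only [h, and_true]
        rw [← hc]
        congr 1
        ext x
        simp only [Finset.mem_filter, Finset.mem_univ, true_and, and_iff_right_iff_imp]
        rintro rfl
        exact (hpow x).2 h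
      · simp only [h, and_false, if_false]
        rw [Finset.card_eq_zero, Finset.filter_eq_empty_iff]
        rintro x - ⟨h1, rfl⟩
        exact h ((hpow x).1 h1)
    · intro x hx
      simp only [Finset.coe_filter, Finset.mem_univ, true_and, Set.mem_ofPred_eq] at hx
      have hi := Algebra.IsIntegral.isIntegral (R := F) x
      have h1 := (hpow x).1 hx
      have h2 : (minpoly F x).natDegree ∣ k + 1 := by
        have := minpoly.degree_dvd hi
        rwa [FiniteField.finrank_extension] at this
      have h3 : 0 < (k + 1) / (minpoly F x).natDegree :=
        Nat.div_pos (Nat.le_of_dvd k.succ_pos h2) (minpoly.natDegree_pos hi)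
      simp only [Finset.mem_coe, Multiset.mem_toFinset]
      exact Multiset.count_pos.1 (h3.trans_le h1)
  rw [Finset.sum_congr rfl fun k _ => key k, Finset.sum_comm, ← hdeg']
  refine Finset.sum_congr rfl fun P hP => ?_
  rw [← Finset.sum_filter, Finset.sum_const, hdeg', card_multiples, smul_eq_mul, mul_comm]
  · rw [Multiset.mem_toFinset] at hP
    exact (hirr P hP).natDegree_pos
  · rw [← hdeg']
    exact Finset.single_le_sum (f := fun P : F[X] => P.natDegree * S.count P)
      (fun _ _ => Nat.zero_le _) hP

end Count

/-! ### L-series of completely multiplicative weights on monic polynomials -/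

section LSeries
open Polynomial Module
variable {F : Type*} [Field F] [Fintype F]

theorem finite_monics (n : ℕ) : {f : F[X] | f.Monic ∧ f.natDegree = n}.Finite := by
  have : Finite (degreeLT F n) := Finite.of_equiv _ (degreeLTEquiv F n).symm.toEquiv
  exact Set.finite_coe_iff.1 (Finite.of_equiv _ (monicEquivDegreeLT n).symm)

variable (F) in
/-- The finite set of monic polynomials of degree `n` over the finite field `F`. -/
noncomputable def monics (n : ℕ) : Finset F[X] := (finite_monics n).toFinset

theorem mem_monics {n : ℕ} {f : F[X]} : f ∈ monics F n ↔ f.Monic ∧ f.natDegree = n := by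
  simp [monics]

/-- The generating series `∑ l(f) X ^ (deg f)`, over all monic polynomials `f`, of a weight `l`. -/
noncomputable def lSeries (l : F[X] → ℂ) : PowerSeries ℂ :=
  PowerSeries.mk fun n => ∑ f ∈ monics F n, l f

/-- The logarithmic derivative of the L-series of a completely multiplicative weight is a series of
sums over the finite extensions of `F`. The coefficient of `X ^ n` in the derivative, the sum of
`(n + 1) l(f)` over `deg f = n + 1`, is rewritten by counting the elements `x` for which
`galPoly F x` divides `f`, and then each such `f` is written as `galPoly F x * g`. -/
theorem lSeries_log_deriv (p : ℕ) [Fact p.Prime] [CharP F p] (l : F[X] → ℂ)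
    (hl : ∀ f g : F[X], f.Monic → g.Monic → l (f * g) = l f * l g) :
    PowerSeries.derivative ℂ (lSeries l) =
      PowerSeries.mk (fun k => ∑ x : FiniteField.Extension F p (k + 1), l (galPoly F x)) *
        lSeries l := by
  classical
  ext n
  rw [PowerSeries.coeff_derivative, PowerSeries.coeff_mul, Finset.Nat.sum_antidiagonal_eq_sum_range_succ_mk]
  simp only [lSeries, PowerSeries.coeff_mk]
  have h1 : ∀ f ∈ monics F (n + 1), l f * ((n : ℂ) + 1) =
      ∑ k ∈ Finset.range (n + 1), ∑ x : FiniteField.Extension F p (k + 1),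
        if galPoly F x ∣ f then l f else 0 := by
    intro f hf
    obtain ⟨hm, hd⟩ := mem_monics.1 hf
    have := count_galPoly p hm
    rw [hd] at this
    have h2 : ((n : ℂ) + 1) = ((n + 1 : ℕ) : ℂ) := by push_cast; rfl
    rw [h2, ← congrArg (Nat.cast (R := ℂ)) this, Nat.cast_sum, Finset.mul_sum]
    refine Finset.sum_congr rfl fun k _ => ?_
    rw [← Finset.sum_filter, Finset.sum_const, nsmul_eq_mul, mul_comm]
  rw [Finset.sum_mul, Finset.sum_congr rfl h1, Finset.sum_comm]
  refine Finset.sum_congr rfl fun k hk => ?_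
  rw [Finset.sum_comm, Finset.sum_mul]
  refine Finset.sum_congr rfl fun x _ => ?_
  have hk : k < n + 1 := Finset.mem_range.1 hk
  have hc := galPoly_monic F x
  have hcd := natDegree_galPoly F x
  rw [FiniteField.finrank_extension] at hcd
  rw [← Finset.sum_filter, Finset.mul_sum]
  symm
  refine Finset.sum_bij (fun g _ => galPoly F x * g) ?_ ?_ ?_ ?_
  · intro g hg
    obtain ⟨hm, hd⟩ := mem_monics.1 hg
    rw [Finset.mem_filter, mem_monics]
    refine ⟨⟨hc.mul hm, ?_⟩, dvd_mul_right _ _⟩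
    rw [hc.natDegree_mul hm, hcd, hd]; omega
  · intro g _ g' _ h
    exact mul_left_cancel₀ hc.ne_zero h
  · intro f hf
    rw [Finset.mem_filter, mem_monics] at hf
    obtain ⟨⟨hm, hd⟩, g, rfl⟩ := hf
    have hg := hc.of_mul_monic_left hm
    refine ⟨g, mem_monics.2 ⟨hg, ?_⟩, rfl⟩
    rw [hc.natDegree_mul hg, hcd] at hd; omega
  · intro g hg
    exact (hl _ _ hc (mem_monics.1 hg).1).symm

/-! ### The weight whose L-series encodes Gauss sums -/

/-- The weight `θ(α₁ ⋯ αₙ) Ψ(α₁ ^ m + ⋯ + αₙ ^ m)` of a monic polynomial `f` with roots `α₁, …, αₙ`,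
the product of the roots being written as `(-1) ^ n f(0)`. -/
noncomputable def gaussWeight (θ : MulChar F ℂ) (Ψ : AddChar (AlgebraicClosure F) ℂ) (m : ℕ)
    (f : F[X]) : ℂ :=
  θ ((-1) ^ f.natDegree * f.coeff 0) * Ψ (rootPowerSum m f)

variable {ψ : AddChar F ℂ} {Ψ : AddChar (AlgebraicClosure F) ℂ}

omit [Fintype F] in
theorem gaussWeight_mul (θ : MulChar F ℂ) (m : ℕ) (f g : F[X]) (hf : f.Monic) (hg : g.Monic) :
    gaussWeight θ Ψ m (f * g) = gaussWeight θ Ψ m f * gaussWeight θ Ψ m g := by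
  rw [gaussWeight, rootPowerSum_mul m hf hg, AddChar.map_add_eq_mul, hf.natDegree_mul hg,
    mul_coeff_zero, gaussWeight, gaussWeight]
  have : (-1 : F) ^ (f.natDegree + g.natDegree) * (f.coeff 0 * g.coeff 0) =
    ((-1) ^ f.natDegree * f.coeff 0) * ((-1) ^ g.natDegree * g.coeff 0) := by ring
  rw [this, map_mul]
  ring

theorem coeff_zero_lSeries (θ : MulChar F ℂ) (m : ℕ) :
    PowerSeries.coeff 0 (lSeries (gaussWeight θ Ψ m)) = 1 := by
  have : monics F 0 = {1} := by
    ext f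
    rw [mem_monics, Finset.mem_singleton]
    constructor
    · rintro ⟨h, h0⟩; exact h.natDegree_eq_zero.1 h0
    · rintro rfl; exact ⟨monic_one, natDegree_one⟩
  rw [lSeries, PowerSeries.coeff_mk, this]
  simp [gaussWeight, rootPowerSum]

omit [Fintype F] in
theorem gaussWeight_galPoly (hΨ : ∀ a, Ψ (algebraMap F _ a) = ψ a) {E : Type*} [Field E] [Finite E]
    [Algebra F E] (θ : MulChar F ℂ) (m : ℕ) (x : E) :
    gaussWeight θ Ψ m (galPoly F x) = θ (Algebra.norm F x) * ψ (Algebra.trace F E (x ^ m)) := by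
  rw [gaussWeight, galPoly_coeff_zero, rootPowerSum, sum_aroots_galPoly, hΨ]

/-- The effect on the weight of adding `a X ^ (n - m)` to a monic polynomial of degree `n`. The new
constant coefficient is left unevaluated since it depends on whether `m = n`. -/
theorem gaussWeight_shift (hΨ : ∀ a, Ψ (algebraMap F _ a) = ψ a) (θ : MulChar F ℂ) {m n : ℕ}
    (hm : 0 < m) (hmn : m ≤ n) {f : F[X]} (hf : f ∈ monics F n) (a : F) :
    f + C a * X ^ (n - m) ∈ monics F n ∧
    gaussWeight θ Ψ m (f + C a * X ^ (n - m)) =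
      θ ((-1) ^ n * (f + C a * X ^ (n - m)).coeff 0) * (Ψ (rootPowerSum m f) * ψ (-(m * a))) := by
  obtain ⟨hfm, hfd⟩ := mem_monics.1 hf
  have hlt : (C a * X ^ (n - m)).degree < f.degree := by
    refine (degree_C_mul_X_pow_le _ _).trans_lt ?_
    rw [degree_eq_natDegree hfm.ne_zero, hfd]
    exact_mod_cast (by omega : n - m < n)
  have hgm : (f + C a * X ^ (n - m)).Monic := hfm.add_of_left hlt
  have hgd : (f + C a * X ^ (n - m)).natDegree = n := by
    rw [natDegree_add_eq_left_of_degree_lt hlt, hfd]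
  refine ⟨mem_monics.2 ⟨hgm, hgd⟩, ?_⟩
  have h := rootPowerSum_shift hgm hfm (by rw [hgd, hfd]) hm (by rwa [hgd]) (by
    intro i hi
    rw [hgd, coeff_add, coeff_C_mul, coeff_X_pow, if_neg (by omega)]
    simp)
  rw [gaussWeight, h, hgd]
  congr 1
  rw [← hΨ, ← AddChar.map_add_eq_mul]
  congr 1
  simp [coeff_X_pow, sub_eq_add_neg]

/-- For `m = 1` the degree-one polynomials contribute the Gauss sum. In degree `n ≥ 2`, translation of
the coefficient of `X ^ (n - 1)` by `a` keeps the constant coefficient and multiplies the weights by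
`ψ(-a)`, so their sum vanishes. -/
theorem lSeries_one_eq (hψ : ψ ≠ 1) (hΨ : ∀ a, Ψ (algebraMap F _ a) = ψ a) (θ : MulChar F ℂ) :
    lSeries (gaussWeight θ Ψ 1) = 1 + PowerSeries.C (gaussSum θ ψ) * PowerSeries.X := by
  ext n
  match n with
  | 0 => rw [coeff_zero_lSeries]; simp
  | 1 =>
    rw [lSeries, PowerSeries.coeff_mk]
    simp only [map_add, PowerSeries.coeff_one, PowerSeries.coeff_C_mul, PowerSeries.coeff_one_X,
      one_ne_zero, if_false, zero_add, mul_one]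
    rw [gaussSum]
    symm
    refine Finset.sum_bij (fun b _ => X - C b) ?_ ?_ ?_ ?_
    · intro b _
      exact mem_monics.2 ⟨monic_X_sub_C b, natDegree_X_sub_C b⟩
    · intro a _ b _ h
      simpa using h
    · intro f hf
      obtain ⟨hm, hd⟩ := mem_monics.1 hf
      refine ⟨-f.coeff 0, Finset.mem_univ _, ?_⟩
      rw [hm.eq_X_add_C hd]; simp
    · intro b _
      simp only [gaussWeight, natDegree_X_sub_C, rootPowerSum, aroots_X_sub_C, Multiset.map_singleton,
        Multiset.sum_singleton, pow_one, hΨ]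
      simp
  | n + 2 =>
    obtain ⟨a, ha⟩ : ∃ a, ψ a ≠ 1 := by
      by_contra! h
      exact hψ (by ext a; simpa using h a)
    have hr : PowerSeries.coeff (n + 2) (1 + PowerSeries.C (gaussSum θ ψ) * PowerSeries.X) = 0 := by
      simp [PowerSeries.coeff_one]
    rw [hr, lSeries, PowerSeries.coeff_mk]
    have h : ∑ f ∈ monics F (n + 2), gaussWeight θ Ψ 1 f =
        ψ a * ∑ f ∈ monics F (n + 2), gaussWeight θ Ψ 1 f := by
      rw [Finset.mul_sum]
      symm
      refine Finset.sum_bij' (fun f _ => f + C (-a) * X ^ (n + 2 - 1))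
        (fun f _ => f + C a * X ^ (n + 2 - 1)) ?_ ?_ ?_ ?_ ?_
      · exact fun f hf => (gaussWeight_shift hΨ θ one_pos (by omega) hf _).1
      · exact fun f hf => (gaussWeight_shift hΨ θ one_pos (by omega) hf _).1
      · intro f _; rw [C_neg]; ring
      · intro f _; rw [C_neg]; ring
      · intro f hf
        rw [(gaussWeight_shift hΨ θ one_pos (by omega) hf _).2, gaussWeight, (mem_monics.1 hf).2]
        simp
        ring
    have h2 : (ψ a - 1) * ∑ f ∈ monics F (n + 2), gaussWeight θ Ψ 1 f = 0 := by
      linear_combination -h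
    exact (mul_eq_zero.1 h2).resolve_left (sub_ne_zero.2 ha)

open Classical in
/-- The coefficient of degree `d` for the exponent `m = d`, computed by writing each monic polynomial
of degree `d` as the sum of its constant coefficient and a polynomial vanishing at `0`. The first
factor does not depend on `θ`. -/
theorem coeff_lSeries_top (hΨ : ∀ a, Ψ (algebraMap F _ a) = ψ a) {d : ℕ} (hd : 0 < d)
    (hdF : (d : F) ≠ 0) (θ : MulChar F ℂ) :
    PowerSeries.coeff d (lSeries (gaussWeight (θ ^ d) Ψ d)) =
      (∑ f ∈ monics F d with f.coeff 0 = 0, Ψ (rootPowerSum d f)) *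
        ((θ ^ d) (d : F)⁻¹ * gaussSum (θ ^ d) ψ) := by
  -- The sign `(-1) ^ (d + 1)` is harmless because `d (d + 1)` is even.
  have hsign : (θ ^ d) ((-1) ^ (d + 1)) = 1 := by
    rw [MulChar.pow_apply' _ hd.ne', ← map_pow, ← pow_mul,
      Even.neg_one_pow (by rw [mul_comm]; exact Nat.even_mul_succ_self d), map_one]
  have h1 : (θ ^ d) (d : F)⁻¹ * gaussSum (θ ^ d) ψ =
      ∑ b : F, (θ ^ d) ((-1) ^ d * b) * ψ (-(d * b)) := by
    rw [gaussSum, Finset.mul_sum]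
    symm
    refine Fintype.sum_bijective (fun b : F => -((d : F) * b))
      ((Equiv.neg F).bijective.comp (mulLeft_bijective₀ _ hdF)) _ _ fun b => ?_
    rw [← mul_assoc, ← map_mul]
    congr 1
    have : (-1) ^ d * b = (-1) ^ (d + 1) * ((d : F)⁻¹ * -(d * b)) := by
      field_simp; ring
    rw [this, map_mul, hsign, one_mul]
  rw [h1, Finset.sum_mul_sum, lSeries, PowerSeries.coeff_mk, ← Finset.sum_product']
  symm
  refine Finset.sum_bij' (fun fb _ => fb.1 + C fb.2 * X ^ (d - d))
    (fun f _ => (f + C (-f.coeff 0) * X ^ (d - d), f.coeff 0)) ?_ ?_ ?_ ?_ ?_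
  · rintro ⟨f, b⟩ h
    simp only [Finset.mem_product, Finset.mem_filter] at h
    exact (gaussWeight_shift hΨ θ hd le_rfl h.1.1 b).1
  · intro f hf
    simp only [Finset.mem_product, Finset.mem_filter, Finset.mem_univ, and_true]
    exact ⟨(gaussWeight_shift hΨ θ hd le_rfl hf _).1, by simp⟩
  · rintro ⟨f, b⟩ h
    simp only [Finset.mem_product, Finset.mem_filter] at h
    simp [h.1.2]
  · intro f hf
    simp
  · rintro ⟨f, b⟩ h
    simp only [Finset.mem_product, Finset.mem_filter] at h
    rw [(gaussWeight_shift hΨ (θ ^ d) hd le_rfl h.1.1 b).2]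
    simp only [Nat.sub_self, pow_zero, mul_one, coeff_add, coeff_C_zero, h.1.2, zero_add]
    ring

end LSeries

/-! ### Sums over the fibres of the `d`-th power map -/

section Fiber
variable {F : Type*} [Field F] [Fintype F] {E : Type*} [Field E] [Fintype E] [Algebra F E]

theorem exists_pow_eq_of_pow_eq_one {K : Type*} [Field K] [Fintype K] {d : ℕ}
    (hdK : d ∣ Fintype.card K - 1) {u : K} (hu : u ≠ 0)
    (h : u ^ ((Fintype.card K - 1) / d) = 1) : ∃ x, x ^ d = u := by
  classical
  obtain ⟨g, hg⟩ := IsCyclic.exists_generator (α := Kˣ)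
  have hN : 0 < Fintype.card K - 1 := Nat.sub_pos_of_lt Fintype.one_lt_card
  have hord : orderOf g = Fintype.card K - 1 := by
    rw [orderOf_eq_card_of_forall_mem_zpowers hg, Nat.card_eq_fintype_card, Fintype.card_units]
  obtain ⟨k, hk⟩ : ∃ k : ℕ, g ^ k = Units.mk0 u hu :=
    (mem_powers_iff_mem_zpowers.2 (hg (Units.mk0 u hu)))
  have h1 : g ^ (k * ((Fintype.card K - 1) / d)) = 1 := by
    rw [pow_mul, hk]
    ext
    simpa using h
  have h2 := orderOf_dvd_of_pow_eq_one h1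
  rw [hord] at h2
  obtain ⟨e, he⟩ := hdK
  have hd : 0 < d := Nat.pos_of_ne_zero (by rintro rfl; simp at he; omega)
  have he0 : 0 < e := Nat.pos_of_ne_zero (by rintro rfl; simp at he; omega)
  rw [he, Nat.mul_div_cancel_left _ hd] at h2
  obtain ⟨c, rfl⟩ := Nat.dvd_of_mul_dvd_mul_right he0 h2
  refine ⟨((g ^ c : Kˣ) : K), ?_⟩
  rw [← Units.val_pow_eq_pow_val, ← pow_mul, mul_comm, hk, Units.val_mk0]

theorem exists_primitiveRoot {K : Type*} [Field K] [Fintype K] {d : ℕ}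
    (hdK : d ∣ Fintype.card K - 1) : ∃ ζ : K, IsPrimitiveRoot ζ d := by
  classical
  obtain ⟨g, hg⟩ := IsCyclic.exists_generator (α := Kˣ)
  have hN : 0 < Fintype.card K - 1 := Nat.sub_pos_of_lt Fintype.one_lt_card
  have hord : orderOf g = Fintype.card K - 1 := by
    rw [orderOf_eq_card_of_forall_mem_zpowers hg, Nat.card_eq_fintype_card, Fintype.card_units]
  have := IsPrimitiveRoot.coe_units_iff.2 (IsPrimitiveRoot.orderOf g)
  rw [hord] at this
  obtain ⟨e, he⟩ := hdK
  exact ⟨_, this.pow (by omega) (by rw [he, mul_comm])⟩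

/-- The number of `d`-th roots of `u` in `E` is the sum over `i < d` of the characters `χ ^ i ∘ N`: both
are `d` if `u` is a `d`-th power in `E`, equivalently if `χ (N u) = 1`, and `0` otherwise. The link
is that `N u` raised to `(q - 1) / d` is `u` raised to `(#E - 1) / d`. -/
theorem card_pow_eq [DecidableEq E] {d : ℕ} (hdq : d ∣ Fintype.card F - 1) {χ : MulChar F ℂ}
    (hχ : χ ^ d = 1)
    (hχ1 : ∀ v : F, v ≠ 0 → χ v = 1 → v ^ ((Fintype.card F - 1) / d) = 1) {u : E} (hu : u ≠ 0) :
    ((Finset.univ.filter fun x : E => x ^ d = u).card : ℂ) =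
      ∑ i ∈ Finset.range d, (χ ^ i) (Algebra.norm F u) := by
  have hv : Algebra.norm F u ≠ 0 := Algebra.norm_ne_zero_iff.2 hu
  have hd : 0 < d := Nat.pos_of_ne_zero (by
    rintro rfl
    have : 0 < Fintype.card F - 1 := Nat.sub_pos_of_lt Fintype.one_lt_card
    rw [zero_dvd_iff] at hdq; omega)
  have hdvd : Fintype.card F - 1 ∣ Fintype.card E - 1 := by
    rw [Module.card_eq_pow_finrank (K := F) (V := E)]
    simpa using Nat.sub_dvd_pow_sub_pow (Fintype.card F) 1 (Module.finrank F E)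
  have hpow : ∀ i, (χ ^ i) (Algebra.norm F u) = χ (Algebra.norm F u) ^ i := fun i =>
    MulChar.pow_apply_coe χ i (Units.mk0 _ hv)
  simp only [hpow]
  have hz : χ (Algebra.norm F u) ^ d = 1 := by
    rw [← hpow, hχ, MulChar.one_apply hv.isUnit]
  have hcard : (Finset.univ.filter fun x : E => x ^ d = u) = (Polynomial.nthRoots d u).toFinset := by
    ext x; simp [Polynomial.mem_nthRoots hd]
  obtain ⟨ζ, hζ⟩ := exists_primitiveRoot (hdq.trans hdvd)
  rw [hcard, Multiset.toFinset_card_of_nodup (hζ.nthRoots_nodup hu), hζ.card_nthRoots]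
  by_cases h1 : χ (Algebra.norm F u) = 1
  · have hx : ∃ x, x ^ d = u := by
      refine exists_pow_eq_of_pow_eq_one (hdq.trans hdvd) hu ?_
      have h2 := congrArg (algebraMap F E) (hχ1 _ hv h1)
      rw [map_pow, FiniteField.algebraMap_norm_eq_pow, map_one, ← pow_mul, Nat.card_eq_fintype_card,
        Nat.card_eq_fintype_card, ← Nat.mul_div_assoc _ hdq, Nat.div_mul_cancel hdvd] at h2
      exact h2
    rw [if_pos hx, h1]
    simp
  · rw [if_neg, geom_sum_eq h1, hz]
    · simp
    · rintro ⟨x, rfl⟩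
      apply h1
      rw [map_pow, map_pow, ← MulChar.pow_apply' _ hd.ne', hχ, MulChar.one_apply]
      refine (Algebra.norm_ne_zero_iff.2 ?_).isUnit
      rintro rfl
      exact hu (zero_pow hd.ne')

/-- Grouping the elements `x` of `E` according to `u = x ^ d`. -/
theorem sum_fiber {d : ℕ} (hdq : d ∣ Fintype.card F - 1) {χ : MulChar F ℂ} (hχ : χ ^ d = 1)
    (hχ1 : ∀ v : F, v ≠ 0 → χ v = 1 → v ^ ((Fintype.card F - 1) / d) = 1) (η : MulChar F ℂ)
    (ψ : AddChar F ℂ) :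
    ∑ x : E, (η ^ d) (Algebra.norm F x) * ψ (Algebra.trace F E (x ^ d)) =
      ∑ i ∈ Finset.range d, ∑ u : E, (χ ^ i * η) (Algebra.norm F u) * ψ (Algebra.trace F E u) := by
  classical
  have hd : d ≠ 0 := by
    rintro rfl
    have : 0 < Fintype.card F - 1 := Nat.sub_pos_of_lt Fintype.one_lt_card
    rw [zero_dvd_iff] at hdq; omega
  rw [← Finset.sum_fiberwise (s := Finset.univ) (g := fun x : E => x ^ d), Finset.sum_comm]
  refine Finset.sum_congr rfl fun u _ => ?_
  have h : ∀ x ∈ Finset.univ.filter (fun x : E => x ^ d = u),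
      (η ^ d) (Algebra.norm F x) * ψ (Algebra.trace F E (x ^ d)) =
        η (Algebra.norm F u) * ψ (Algebra.trace F E u) := by
    intro x hx
    rw [Finset.mem_filter] at hx
    rw [MulChar.pow_apply' _ hd, ← map_pow, ← map_pow, hx.2]
  rw [Finset.sum_congr rfl h, Finset.sum_const, nsmul_eq_mul]
  rcases eq_or_ne u 0 with rfl | hu
  · have h0 : ∀ θ : MulChar F ℂ, θ (Algebra.norm F (0 : E)) = 0 := fun θ => by
      rw [Algebra.norm_zero, MulChar.map_zero]
    simp only [h0, zero_mul, mul_zero, Finset.sum_const_zero]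
  · rw [card_pow_eq hdq hχ hχ1 hu, Finset.sum_mul]
    refine Finset.sum_congr rfl fun i _ => ?_
    rw [MulChar.mul_apply, mul_assoc]

end Fiber

/-! ### The product relation -/

section Final
open Polynomial
variable {F : Type*} [Field F] [Fintype F]

omit [Fintype F] in
/-- Compose `ψ` with an `F`-linear retraction of the algebraic closure onto `F`. -/
theorem exists_extension (ψ : AddChar F ℂ) : ∃ Ψ : AddChar (AlgebraicClosure F) ℂ,
    ∀ a, Ψ (algebraMap F _ a) = ψ a := by
  obtain ⟨r, hr⟩ := LinearMap.exists_leftInverse_of_injective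
    (Algebra.linearMap F (AlgebraicClosure F))
    (LinearMap.ker_eq_bot.2 (algebraMap F (AlgebraicClosure F)).injective)
  exact ⟨ψ.compAddMonoidHom r.toAddMonoidHom, fun a => congrArg ψ (LinearMap.congr_fun hr a)⟩

theorem coeff_prod_linear (d : ℕ) (c : ℕ → ℂ) :
    PowerSeries.coeff d (∏ i ∈ Finset.range d, (1 + PowerSeries.C (c i) * PowerSeries.X)) =
      ∏ i ∈ Finset.range d, c i := by
  have h : ∏ i ∈ Finset.range d, (1 + PowerSeries.C (c i) * PowerSeries.X) =
      ((∏ i ∈ Finset.range d, (1 + C (c i) * X) : ℂ[X]) : PowerSeries ℂ) := by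
    rw [← Polynomial.coeToPowerSeries.ringHom_apply, map_prod]
    simp
  rw [h, Polynomial.coeff_coe]
  have := coeff_prod_of_natDegree_le (s := Finset.range d) (fun i => (1 + C (c i) * X : ℂ[X])) 1
    (fun i _ => by compute_degree)
  simp only [Finset.card_range, mul_one] at this
  rw [this]
  simp [coeff_one]

/-- Both sides have the same logarithmic derivative, by `sum_fiber`. -/
theorem lSeries_pow_eq_prod {ψ : AddChar F ℂ} {Ψ : AddChar (AlgebraicClosure F) ℂ} (hψ : ψ ≠ 1)
    (hΨ : ∀ a, Ψ (algebraMap F _ a) = ψ a)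
    {d : ℕ} (hdq : d ∣ Fintype.card F - 1) {χ : MulChar F ℂ} (hχ : χ ^ d = 1)
    (hχ1 : ∀ v : F, v ≠ 0 → χ v = 1 → v ^ ((Fintype.card F - 1) / d) = 1) (η : MulChar F ℂ) :
    lSeries (gaussWeight (η ^ d) Ψ d) = ∏ i ∈ Finset.range d,
      (1 + PowerSeries.C (gaussSum (χ ^ i * η) ψ) * PowerSeries.X) := by
  obtain ⟨p, hp⟩ := CharP.exists F
  have : Fact p.Prime := ⟨CharP.char_is_prime F p⟩
  rw [← Finset.prod_congr rfl fun i _ => lSeries_one_eq hψ hΨ (χ ^ i * η)]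
  refine ps_log_deriv_unique (lSeries_log_deriv p _ (gaussWeight_mul _ _)) ?_ ?_
  · rw [ps_log_deriv_prod _ _ _ fun i _ => lSeries_log_deriv p _ (gaussWeight_mul _ _)]
    congr 1
    ext k
    rw [map_sum]
    simp only [PowerSeries.coeff_mk, gaussWeight_galPoly hΨ]
    rw [sum_fiber hdq hχ hχ1]
    simp only [pow_one]
  · rw [coeff_zero_lSeries, PowerSeries.coeff_zero_eq_constantCoeff_apply, map_prod]
    symm
    refine Finset.prod_eq_one fun i _ => ?_
    rw [← PowerSeries.coeff_zero_eq_constantCoeff_apply, coeff_zero_lSeries]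

/-- The Hasse–Davenport product relation, for a character `χ` of order dividing `d` whose kernel on
`Fˣ` consists of elements killed by `(q - 1) / d`. -/
theorem hasse_davenport_product {ψ : AddChar F ℂ} (hψ : ψ ≠ 1)
    {d : ℕ} (hdq : d ∣ Fintype.card F - 1) {χ : MulChar F ℂ} (hχ : χ ^ d = 1)
    (hχ1 : ∀ v : F, v ≠ 0 → χ v = 1 → v ^ ((Fintype.card F - 1) / d) = 1) (η : MulChar F ℂ) :
    ∏ i ∈ Finset.range d, gaussSum (χ ^ i * η) ψ =
      (∏ i ∈ Finset.range (d - 1), gaussSum (χ ^ (i + 1)) ψ) *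
        ((η ^ d) (d : F)⁻¹ * gaussSum (η ^ d) ψ) := by
  classical
  obtain ⟨Ψ, hΨ⟩ := exists_extension ψ
  have hq : 1 < Fintype.card F := Fintype.one_lt_card
  have hd : 0 < d := Nat.pos_of_ne_zero (by rintro rfl; rw [zero_dvd_iff] at hdq; omega)
  -- The characteristic divides `q`, hence not the divisor `d` of `q - 1`.
  have hdF : (d : F) ≠ 0 := by
    intro h
    obtain ⟨e, he⟩ := hdq
    have h1 : (Fintype.card F : F) = d * e + 1 := by
      rw [← Nat.sub_add_cancel hq.le, he]; push_cast; ring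
    rw [FiniteField.cast_card_eq_zero, h] at h1
    simp at h1
  have key : ∀ η : MulChar F ℂ, _ := fun η =>
    (coeff_prod_linear d fun i => gaussSum (χ ^ i * η) ψ).symm.trans
    ((congrArg (PowerSeries.coeff d) (lSeries_pow_eq_prod hψ hΨ hdq hχ hχ1 η)).symm.trans
      (coeff_lSeries_top hΨ hd hdF η))
  -- The case `η = 1`, in which the factor `g(1) = -1` occurs on both sides, determines the constant.
  have h1 := key 1
  obtain ⟨e, rfl⟩ : ∃ e, d = e + 1 := ⟨d - 1, by omega⟩
  rw [one_pow, gaussSum_one_left hψ, MulChar.one_apply (inv_ne_zero hdF).isUnit,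
    Finset.prod_range_succ', pow_zero, one_mul, gaussSum_one_left hψ] at h1
  simp only [mul_one] at h1
  rw [key η, Nat.add_sub_cancel]
  congr 1
  linear_combination h1

end Final

theorem stmt4 {F : Type*} [Field F] [Fintype F]
    (ψ : AddChar F ℂ) (hψ : ψ ≠ 1)
    (q d : ℕ) (hq : q = Fintype.card F) (hd : 0 < d) (hdq : d ∣ q - 1)
    (t : ℕ) (ht : t = (q - 1) / d)
    (T : MulChar F ℂ) (hT : ∀ χ : MulChar F ℂ, ∃ k : ℤ, χ = T ^ k)
    (j : ℤ)
    (hden : (T ^ (-((d : ℤ) * j))) (d : F) *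
        ∏ i ∈ Finset.range (d - 1), gaussSum (T ^ ((i + 1) * t)) ψ ≠ 0) :
    gaussSum (T ^ ((d : ℤ) * j)) ψ
      = (∏ i ∈ Finset.range d, gaussSum (T ^ ((i : ℤ) * (t : ℤ) + j)) ψ) /
          ((T ^ (-((d : ℤ) * j))) (d : F) *
            ∏ i ∈ Finset.range (d - 1), gaussSum (T ^ ((i + 1) * t)) ψ) := by
  subst hq
  have htd : t * d = Fintype.card F - 1 := by rw [ht, Nat.div_mul_cancel hdq]
  have hχ : (T ^ t) ^ d = 1 := by
    rw [← pow_mul, htd]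
    exact orderOf_dvd_iff_pow_eq_one.1 (MulChar.orderOf_dvd_card_sub_one F T)
  have hχ1 : ∀ v : F, v ≠ 0 → (T ^ t) v = 1 → v ^ ((Fintype.card F - 1) / d) = 1 := by
    intro v hv h
    rw [← ht]
    -- If `v ^ t ≠ 1`, some character, hence a power of `T`, is nontrivial on `v ^ t`.
    by_contra hne
    obtain ⟨χ, hχ⟩ := MulChar.exists_apply_ne_one_of_hasEnoughRootsOfUnity F ℂ hne
    obtain ⟨k, rfl⟩ := hT χ
    apply hχ
    have h1 : ∀ χ : MulChar F ℂ, χ (v ^ t) = (χ ^ t) v := fun χ => by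
      rw [map_pow]; exact (MulChar.pow_apply_coe χ t (Units.mk0 v hv)).symm
    have h2 : ((T ^ t) ^ k) v = 1 := by
      have h3 : ∀ χ : MulChar F ℂ, χ v = 1 ↔ MulChar.toUnitHom χ (Units.mk0 v hv) = 1 := by
        intro χ
        rw [Units.ext_iff, MulChar.coe_toUnitHom, Units.val_mk0, Units.val_one]
      rw [h3] at h ⊢
      change MulChar.mulEquivToUnitHom _ _ = 1
      rw [map_zpow, MonoidHom.zpow_apply]
      change MulChar.toUnitHom (T ^ t) _ ^ k = 1
      rw [h, one_zpow]
    rw [h1, ← zpow_natCast, ← zpow_mul, mul_comm, zpow_mul, zpow_natCast, h2]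
  have main := hasse_davenport_product hψ hdq hχ hχ1 (T ^ j)
  have hi : ∀ i : ℕ, T ^ ((i : ℤ) * (t : ℤ) + j) = (T ^ t) ^ i * T ^ j := fun i => by
    rw [zpow_add, ← pow_mul, mul_comm t i]; norm_cast
  have hdj : T ^ ((d : ℤ) * j) = (T ^ j) ^ d := by
    rw [mul_comm, zpow_mul, zpow_natCast]
  have hi' : ∀ i : ℕ, T ^ ((i + 1) * t) = (T ^ t) ^ (i + 1) := fun i => by
    rw [← pow_mul, mul_comm]
  rw [eq_div_iff hden]
  simp only [hi, hi']
  rw [main, zpow_neg, hdj, MulChar.inv_apply']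
  ring
end

section
/- Let q be a prime power with q ≡ 1 (mod 5) and t = (q-1)/5, and let T be a generator of the character group of F_q^×. For λ ∈ F_q with λ^5 ≠ 1 and λ ≠ 0, the sum (1/(q-1)) ∑_{j=0}^{q-2} g(T^j)^3 g(T^{t+j}) g(T^{4t+j}) / g(T^{5j}) · T^{5j}(5λ) equals -g(T^{2t})^2 g(T^t) - g(T^{3t})^2 g(T^{4t}) + q^2 · ₂F₁(T^{2t}, T^{3t}; ε | 1/λ^5)_q, where ₂F₁ is Greene's finite field hypergeometric function and ε the trivial character. -/
/-!
Write `χ = T ^ t`, a character of order five. The Hasse–Davenport product formula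
`∏_{a < 5} g(ρ χ ^ a) = q² ρ⁻⁵(5) g(ρ⁵)` (`HD.hasse_davenport`), applied to `ρ = T ^ j`, turns the
`j`-th summand into `q² g(ρ)² / (g(ρ χ²) g(ρ χ³)) · ρ(λ⁵)`. Replacing the reciprocals of Gauss sums
by conjugate Gauss sums gives `g(ρ)² g(ρ⁻¹ χ³) g(ρ⁻¹ χ²) ρ(λ⁵)`, except for `ρ = χ³` and
`ρ = χ²`, where one of the denominators belongs to the trivial character; these two exceptions
account for the two products of Gauss sums on the right-hand side (`HD.summand_eq`). Finally
`g(ρ) g(ρ⁻¹ A⁻¹) = g(A⁻¹) ∑_r ρ(r) A(1 + r)`, and summing over `ρ` restricts the resulting double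
sum to `r s λ⁵ = 1`, which is the sum defining Greene's function
(`HD.sum_gaussSum_eq_greene2F1`).

The product formula is proved with `L`-functions of `F[X]`. For a monic `f` with roots `α` put
`w(f) = ρ(∏ α) ψ(∑ α)` and `w₅(f) = ρ(∏ α)⁵ ψ(∑ α⁵)`, both completely multiplicative in `f`.
For such a function, Newton's recursion (`HD.newton_recursion`), the logarithmic derivative of the
Euler product, relates the sums `cₙ` over the monic polynomials of degree `n` to the sums `sₖ`
of `w` over the characteristic polynomials of the elements of the extension of degree `k`. It
follows from the count `HD.sum_card_charPoly_dvd` of the characteristic polynomials dividing `f`.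
For `w` one has `c₁ = g(ρ)` and `cₙ = 0` for `n ≥ 2`, so `sₖ = -(-g(ρ))ᵏ`. Grouping the elements
`x` of an extension by `x⁵` expresses `sₖ` for `w₅` as the sum over `a < 5` of `sₖ` for
`ρ χ ^ a`; hence the degree five coefficient for `w₅` is `∏_{a < 5} g(ρ χ ^ a)`. On the other hand,
by Newton's identities the constant coefficient of a quintic enters `∑ α⁵` only through `5 ∏ α`, so
this coefficient is `ρ⁻⁵(5) g(ρ⁵)` times a factor independent of `ρ`. The case `ρ = 1` shows that
the factor is `g(χ) g(χ²) g(χ³) g(χ⁴) = q²`.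
-/

/-- Greene's finite field hypergeometric function ₂F₁(A, B; C | x). -/
noncomputable def greene2F1 {F : Type*} [Field F] [Fintype F]
    (A B C : MulChar F ℂ) (x : F) : ℂ :=
  (1 : MulChar F ℂ) x * ((B * C) (-1) / (Fintype.card F : ℂ)) *
    ∑ y : F, B y * (B⁻¹ * C) (1 - y) * A⁻¹ (1 - x * y)

namespace HD

open Polynomial Finset

set_option linter.unusedSectionVars false

/-! ### Power sums of the roots of a polynomial -/

section PowerSums

variable {R : Type*} [CommRing R]

/-- The product of the roots of a monic polynomial, read off its constant coefficient. -/
noncomputable def rootProd (f : R[X]) : R := (-1) ^ f.natDegree * f.coeff 0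

/-- The sum of the roots of a monic polynomial, read off its reverse `∏ (1 - αᵢ X)`. -/
noncomputable def rootSum (f : R[X]) : R := -f.reverse.coeff 1

/-- The sum of the fifth powers of the roots of a monic polynomial, written by Newton's identities
in terms of the coefficients of its reverse `∏ (1 - αᵢ X)`. -/
noncomputable def rootSum5 (f : R[X]) : R :=
  -f.reverse.coeff 1 ^ 5 + 5 * f.reverse.coeff 1 ^ 3 * f.reverse.coeff 2
    - 5 * f.reverse.coeff 1 * f.reverse.coeff 2 ^ 2
    - 5 * f.reverse.coeff 1 ^ 2 * f.reverse.coeff 3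
    + 5 * f.reverse.coeff 2 * f.reverse.coeff 3
    + 5 * f.reverse.coeff 1 * f.reverse.coeff 4 - 5 * f.reverse.coeff 5

variable [IsDomain R]

lemma rootProd_mul {f g : R[X]} (hf : f.Monic) (hg : g.Monic) :
    rootProd (f * g) = rootProd f * rootProd g := by
  simp only [rootProd, hf.natDegree_mul hg, mul_coeff_zero, pow_add]
  ring

lemma coeff_zero_reverse_monic {f : R[X]} (hf : f.Monic) : f.reverse.coeff 0 = 1 := by
  rw [coeff_zero_reverse]; exact hf

lemma rootSum_mul {f g : R[X]} (hf : f.Monic) (hg : g.Monic) :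
    rootSum (f * g) = rootSum f + rootSum g := by
  simp only [rootSum, reverse_mul_of_domain, coeff_mul, Finset.Nat.sum_antidiagonal_eq_sum_range_succ_mk,
    Finset.sum_range_succ, Finset.sum_range_zero, coeff_zero_reverse_monic hf,
    coeff_zero_reverse_monic hg, Nat.sub_self, Nat.sub_zero]
  ring

lemma rootSum5_mul {f g : R[X]} (hf : f.Monic) (hg : g.Monic) :
    rootSum5 (f * g) = rootSum5 f + rootSum5 g := by
  simp only [rootSum5, reverse_mul_of_domain, coeff_mul, Finset.Nat.sum_antidiagonal_eq_sum_range_succ_mk,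
    Finset.sum_range_succ, Finset.sum_range_zero, coeff_zero_reverse_monic hf,
    coeff_zero_reverse_monic hg, Nat.sub_self, Nat.sub_zero, Nat.reduceSub]
  ring

lemma coeff_reverse_X_sub_C (a : R) (i : ℕ) :
    (X - C a).reverse.coeff i = if i = 0 then 1 else if i = 1 then -a else 0 := by
  rw [coeff_reverse, natDegree_X_sub_C]
  match i with
  | 0 => simp
  | 1 => simp
  | i + 2 =>
    rw [revAt_eq_self_of_lt (by omega)]
    simp [coeff_X]

@[simp] lemma rootProd_X_sub_C (a : R) : rootProd (X - C a) = a := by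
  simp [rootProd]

@[simp] lemma rootSum_X_sub_C (a : R) : rootSum (X - C a) = a := by
  simp [rootSum]

@[simp] lemma rootSum5_X_sub_C (a : R) : rootSum5 (X - C a) = a ^ 5 := by
  simp only [rootSum5, coeff_reverse_X_sub_C]
  norm_num
  ring

lemma rootProd_prod {ι : Type*} (s : Finset ι) (a : ι → R) :
    rootProd (∏ i ∈ s, (X - C (a i))) = ∏ i ∈ s, a i := by
  classical
  induction s using Finset.induction_on with
  | empty => simp [rootProd]
  | insert i s hi ih =>
    rw [Finset.prod_insert hi, Finset.prod_insert hi,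
      rootProd_mul (monic_X_sub_C _) (monic_prod_of_monic _ _ fun _ _ => monic_X_sub_C _), ih,
      rootProd_X_sub_C]

lemma rootSum_prod {ι : Type*} (s : Finset ι) (a : ι → R) :
    rootSum (∏ i ∈ s, (X - C (a i))) = ∑ i ∈ s, a i := by
  classical
  induction s using Finset.induction_on with
  | empty => simp [rootSum, ← C_1, -map_one]
  | insert i s hi ih =>
    rw [Finset.prod_insert hi, Finset.sum_insert hi,
      rootSum_mul (monic_X_sub_C _) (monic_prod_of_monic _ _ fun _ _ => monic_X_sub_C _), ih,
      rootSum_X_sub_C]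

lemma rootSum5_prod {ι : Type*} (s : Finset ι) (a : ι → R) :
    rootSum5 (∏ i ∈ s, (X - C (a i))) = ∑ i ∈ s, a i ^ 5 := by
  classical
  induction s using Finset.induction_on with
  | empty => simp [rootSum5, ← C_1, -map_one]
  | insert i s hi ih =>
    rw [Finset.prod_insert hi, Finset.sum_insert hi,
      rootSum5_mul (monic_X_sub_C _) (monic_prod_of_monic _ _ fun _ _ => monic_X_sub_C _), ih,
      rootSum5_X_sub_C]

variable {S : Type*} [CommRing S] [IsDomain S] (φ : R →+* S)

lemma coeff_reverse_map {f : R[X]} (hf : f.Monic) (i : ℕ) :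
    (f.map φ).reverse.coeff i = φ (f.reverse.coeff i) := by
  simp [coeff_reverse, hf.natDegree_map φ]

lemma rootProd_map {f : R[X]} (hf : f.Monic) : rootProd (f.map φ) = φ (rootProd f) := by
  simp [rootProd, hf.natDegree_map φ]

lemma rootSum_map {f : R[X]} (hf : f.Monic) : rootSum (f.map φ) = φ (rootSum f) := by
  simp [rootSum, coeff_reverse_map φ hf]

lemma rootSum5_map {f : R[X]} (hf : f.Monic) : rootSum5 (f.map φ) = φ (rootSum5 f) := by
  simp only [rootSum5, coeff_reverse_map φ hf, map_neg, map_sub, map_add, map_mul, map_pow,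
    map_ofNat]

end PowerSums

/-! ### Monic polynomials over a finite field -/

section MonicSets

variable (F : Type*) [Field F] [Fintype F]

open Classical in
/-- The finite set of monic polynomials of degree `n` over a finite field. -/
noncomputable def monics (n : ℕ) : Finset F[X] :=
  (univ : Finset (Fin n → F)).image fun c => X ^ n + ∑ i : Fin n, C (c i) * X ^ (i : ℕ)

variable {F}

lemma mem_monics {n : ℕ} {f : F[X]} : f ∈ monics F n ↔ f.Monic ∧ f.natDegree = n := by
  classical
  simp only [monics, mem_image, mem_univ, true_and]
  constructor
  · rintro ⟨c, rfl⟩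
    have h : (∑ i : Fin n, C (c i) * X ^ (i : ℕ) : F[X]).degree < n := degree_sum_fin_lt c
    refine ⟨monic_X_pow_add h, ?_⟩
    rw [natDegree_add_eq_left_of_degree_lt (by rwa [degree_X_pow]), natDegree_X_pow]
  · rintro ⟨hf, rfl⟩
    refine ⟨fun i => f.coeff i, ?_⟩
    conv_rhs => rw [hf.as_sum, Finset.sum_range]

lemma monics_zero : monics F 0 = {1} := by
  ext f
  simp only [mem_monics, mem_singleton]
  constructor
  · rintro ⟨h, h0⟩; exact h.natDegree_eq_zero.mp h0
  · rintro rfl; simp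

/-- Translating by a polynomial of degree below `n` permutes the monic polynomials of degree `n`. -/
lemma sum_monics_add {n : ℕ} {p : F[X]} (hp : p.degree < n) (w : F[X] → ℂ) :
    ∑ f ∈ monics F n, w (f + p) = ∑ f ∈ monics F n, w f := by
  have key : ∀ (p : F[X]), p.degree < n → ∀ f ∈ monics F n, f + p ∈ monics F n := by
    intro p hp f hf
    rw [mem_monics] at hf ⊢
    have hlt : p.degree < f.degree := by
      rw [degree_eq_natDegree hf.1.ne_zero, hf.2]; exact hp
    exact ⟨hf.1.add_of_left hlt, by rw [natDegree_add_eq_left_of_degree_lt hlt, hf.2]⟩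
  refine Finset.sum_bij' (fun f _ => f + p) (fun f _ => f + -p) (key p hp)
    (key (-p) (by rwa [degree_neg])) ?_ ?_ ?_ <;> simp

/-- Multiples of a monic `g` of degree `k` among the monic polynomials of degree `n ≥ k`
correspond to their cofactors, which are the monic polynomials of degree `n - k`. -/
lemma sum_monics_dvd {n k : ℕ} (hk : k ≤ n) {g : F[X]} (hg : g ∈ monics F k) (w : F[X] → ℂ)
    [DecidablePred fun f : F[X] => g ∣ f] :
    ∑ f ∈ (monics F n).filter (fun f => g ∣ f), w f = ∑ h ∈ monics F (n - k), w (g * h) := by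
  obtain ⟨hgm, hgd⟩ := mem_monics.mp hg
  symm
  refine Finset.sum_bij (fun h _ => g * h) ?_ ?_ ?_ ?_
  · intro h hh
    obtain ⟨hm, hd⟩ := mem_monics.mp hh
    simp only [mem_filter, mem_monics, dvd_mul_right, and_true]
    exact ⟨hgm.mul hm, by rw [hgm.natDegree_mul hm]; omega⟩
  · intro a _ b _ hab
    exact mul_left_cancel₀ hgm.ne_zero hab
  · intro f hf
    simp only [mem_filter, mem_monics] at hf
    obtain ⟨⟨hfm, hfd⟩, h, rfl⟩ := hf
    have hm : h.Monic := hgm.of_mul_monic_left hfm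
    rw [hgm.natDegree_mul hm] at hfd
    exact ⟨h, mem_monics.mpr ⟨hm, by omega⟩, rfl⟩
  · intro _ _; rfl

end MonicSets

/-! ### Frobenius orbits and characteristic polynomials -/

section Orbits

variable {F : Type*} [Field F] [Fintype F] {K : Type*} [Field K] [Algebra F K]

local notation "q" => Fintype.card F

lemma mem_range_of_pow_card {x : K} (hx : x ^ q = x) : ∃ a : F, algebraMap F K a = x := by
  have h : (X ^ q - X : F[X]) = ∏ a : F, (X - C a) := by
    have := (FiniteField.isSplittingField_sub F F).splits
    have hm : (X ^ q - X : F[X]).Monic := monic_X_pow_sub (by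
      rw [degree_X]; exact_mod_cast Fintype.one_lt_card)
    rw [Algebra.algebraMap_self, Polynomial.map_id] at this
    have h2 := this.eq_prod_roots_of_monic hm
    rw [FiniteField.roots_X_pow_card_sub_X] at h2
    exact h2
  have h2 := congrArg (aeval x) h
  simp only [map_sub, map_pow, aeval_X, hx, sub_self, map_prod, aeval_C] at h2
  obtain ⟨a, -, ha⟩ := Finset.prod_eq_zero_iff.mp h2.symm
  exact ⟨a, (sub_eq_zero.mp ha).symm⟩

lemma frob_iterate (x : K) (i : ℕ) : (fun y : K => y ^ q)^[i] x = x ^ q ^ i := by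
  induction i with
  | zero => simp
  | succ i ih => rw [Function.iterate_succ_apply', ih, ← pow_mul, pow_succ]

/-- For `x ^ q ^ k = x`, the characteristic polynomial of `x` as an element of the extension
of `F` of degree `k`, with coefficients viewed in `K`. -/
noncomputable def orbitPoly (F : Type*) [Fintype F] (k : ℕ) (x : K) : K[X] :=
  ∏ i ∈ range k, (X - C (x ^ Fintype.card F ^ i))

lemma orbitPoly_monic (k : ℕ) (x : K) : (orbitPoly F k x).Monic :=
  monic_prod_of_monic _ _ fun _ _ => monic_X_sub_C _

lemma orbitPoly_natDegree (k : ℕ) (x : K) : (orbitPoly F k x).natDegree = k := by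
  rw [orbitPoly, natDegree_prod_of_monic _ _ fun _ _ => monic_X_sub_C _]
  simp only [natDegree_X_sub_C, sum_const, card_range, smul_eq_mul, mul_one]

/-- The orbit polynomial is fixed by Frobenius, hence has coefficients in `F`. -/
lemma exists_orbitPoly_descent {k : ℕ} {x : K} (hx : x ^ q ^ k = x) :
    ∃ g : F[X], g ∈ monics F k ∧ g.map (algebraMap F K) = orbitPoly F k x := by
  have hfix : (orbitPoly F k x).map (FiniteField.frobeniusAlgHom F K : K →+* K)
      = orbitPoly F k x := by
    rw [orbitPoly, Polynomial.map_prod]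
    have : ∀ i ∈ range k, (X - C (x ^ q ^ i)).map (FiniteField.frobeniusAlgHom F K : K →+* K)
        = X - C (x ^ q ^ (i + 1)) := by
      intro i _
      simp only [Polynomial.map_sub, map_X, map_C, RingHom.coe_coe,
        FiniteField.coe_frobeniusAlgHom, ← pow_mul, ← pow_succ]
    rw [Finset.prod_congr rfl this]
    cases k with
    | zero => simp
    | succ k => rw [Finset.prod_range_succ, Finset.prod_range_succ', hx, pow_zero, pow_one]
  have hl : orbitPoly F k x ∈ lifts (algebraMap F K) := by
    rw [lifts_iff_coeff_lifts]
    intro n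
    have := congrArg (fun p => coeff p n) hfix
    simp only [coeff_map] at this
    exact mem_range_of_pow_card this
  obtain ⟨g, hg, hd, hm⟩ := lifts_and_natDegree_eq_and_monic hl (orbitPoly_monic k x)
  exact ⟨g, mem_monics.mpr ⟨hm, by rw [hd, orbitPoly_natDegree]⟩, hg⟩

open Classical in
/-- For `x` in the extension of `F` of degree `k` inside `K`, its characteristic polynomial
over `F`; a junk value for the other `x`. -/
noncomputable def charPoly (F : Type*) [Field F] [Fintype F] [Algebra F K] (k : ℕ) (x : K) : F[X] :=
  if hx : x ^ Fintype.card F ^ k = x then (exists_orbitPoly_descent hx).choose else 0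

lemma charPoly_mem {k : ℕ} {x : K} (hx : x ^ q ^ k = x) : charPoly F k x ∈ monics F k := by
  rw [charPoly, dif_pos hx]; exact (exists_orbitPoly_descent hx).choose_spec.1

lemma charPoly_map {k : ℕ} {x : K} (hx : x ^ q ^ k = x) :
    (charPoly F k x).map (algebraMap F K) = orbitPoly F k x := by
  rw [charPoly, dif_pos hx]; exact (exists_orbitPoly_descent hx).choose_spec.2

variable (F K) in
/-- The subfield with `q ^ k` elements of an algebraically closed `K`, for `k ≥ 1`, as a finite
set; for `k = 0` it is empty, as the roots of the zero polynomial. -/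
noncomputable def fixedPts (k : ℕ) : Finset K :=
  open Classical in (X ^ q ^ k - X : K[X]).roots.toFinset

lemma mem_fixedPts {k : ℕ} (hk : 1 ≤ k) {x : K} : x ∈ fixedPts F K k ↔ x ^ q ^ k = x := by
  classical
  have h1 : 1 < q ^ k := Nat.one_lt_pow (by omega) Fintype.one_lt_card
  rw [fixedPts, Multiset.mem_toFinset, mem_roots (FiniteField.X_pow_card_sub_X_ne_zero _ h1)]
  simp [sub_eq_zero]

lemma rootProd_charPoly {k : ℕ} {x : K} (hx : x ^ q ^ k = x) :
    algebraMap F K (rootProd (charPoly F k x)) = x ^ ∑ i ∈ range k, q ^ i := by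
  rw [← rootProd_map _ (mem_monics.mp (charPoly_mem hx)).1, charPoly_map hx, orbitPoly,
    rootProd_prod, Finset.prod_pow_eq_pow_sum]

lemma pow_five_fixed {k : ℕ} {x : K} (hx : x ^ q ^ k = x) : (x ^ 5) ^ q ^ k = x ^ 5 := by
  rw [← pow_mul, mul_comm, pow_mul, hx]

lemma rootProd_charPoly_pow_five {k : ℕ} {x : K} (hx : x ^ q ^ k = x) :
    rootProd (charPoly F k (x ^ 5)) = rootProd (charPoly F k x) ^ 5 := by
  apply (algebraMap F K).injective
  rw [map_pow, rootProd_charPoly hx, rootProd_charPoly (pow_five_fixed hx), ← pow_mul, ← pow_mul,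
    mul_comm]

lemma rootSum_charPoly_pow_five {k : ℕ} {x : K} (hx : x ^ q ^ k = x) :
    rootSum (charPoly F k (x ^ 5)) = rootSum5 (charPoly F k x) := by
  apply (algebraMap F K).injective
  have hx5 := pow_five_fixed hx
  rw [← rootSum_map _ (mem_monics.mp (charPoly_mem hx5)).1, charPoly_map hx5, orbitPoly,
    rootSum_prod, ← rootSum5_map _ (mem_monics.mp (charPoly_mem hx)).1, charPoly_map hx, orbitPoly,
    rootSum5_prod]
  refine Finset.sum_congr rfl fun i _ => ?_
  rw [← pow_mul, ← pow_mul, mul_comm]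

/-! ### Divisors of polynomials and Newton's identities -/

lemma orbitPoly_mul {d : ℕ} {x : K} (hx : x ^ q ^ d = x) (i : ℕ) :
    orbitPoly F (d * i) x = orbitPoly F d x ^ i := by
  induction i with
  | zero => simp [orbitPoly]
  | succ i ih =>
    have hper : x ^ q ^ (d * i) = x := by
      have h : Function.IsPeriodicPt (fun y : K => y ^ q) d x := by
        rw [Function.IsPeriodicPt, Function.IsFixedPt, frob_iterate, hx]
      have := h.mul_const i
      rwa [Function.IsPeriodicPt, Function.IsFixedPt, frob_iterate] at this
    rw [pow_succ, ← ih, orbitPoly, orbitPoly, orbitPoly, mul_add, mul_one, Finset.prod_range_add]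
    congr 1
    refine Finset.prod_congr rfl fun j _ => ?_
    rw [pow_add, pow_mul, hper]

lemma map_frob_map (f : F[X]) :
    (f.map (algebraMap F K)).map (FiniteField.frobeniusAlgHom F K : K →+* K)
      = f.map (algebraMap F K) := by
  rw [Polynomial.map_map, AlgHom.comp_algebraMap]

/-- Conjugate elements are roots of the same multiplicity. -/
lemma conj_pow_dvd {f : F[X]} {x : K} {i : ℕ} (h : (X - C x) ^ i ∣ f.map (algebraMap F K)) (j : ℕ) :
    (X - C (x ^ q ^ j)) ^ i ∣ f.map (algebraMap F K) := by
  induction j with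
  | zero => simpa using h
  | succ j ih =>
    have := Polynomial.map_dvd (FiniteField.frobeniusAlgHom F K : K →+* K) ih
    rw [map_frob_map] at this
    simpa only [Polynomial.map_pow, Polynomial.map_sub, map_X, map_C, RingHom.coe_coe,
        FiniteField.coe_frobeniusAlgHom, ← pow_mul, ← pow_succ] using this

lemma frob_injective : Function.Injective (fun y : K => y ^ q) := by
  have := (FiniteField.frobeniusAlgHom F K : K →+* K).injective
  simpa [FiniteField.coe_frobeniusAlgHom] using this

/-- A power of the orbit polynomial over one full period divides `f` exactly up to the
multiplicity of `x` as a root of `f`. -/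
lemma orbitPoly_pow_dvd_iff {f : F[X]} (hf : f ≠ 0) {x : K} {d : ℕ}
    (hd : d = Function.minimalPeriod (fun y : K => y ^ q) x) (hd0 : 0 < d) (i : ℕ) :
    orbitPoly F d x ^ i ∣ f.map (algebraMap F K) ↔
      i ≤ (f.map (algebraMap F K)).rootMultiplicity x := by
  have hg : f.map (algebraMap F K) ≠ 0 := Polynomial.map_ne_zero hf
  rw [le_rootMultiplicity_iff hg]
  constructor
  · intro h
    refine (pow_dvd_pow_of_dvd ?_ i).trans h
    have := Finset.dvd_prod_of_mem (fun i => X - C (x ^ q ^ i)) (Finset.mem_range.mpr hd0)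
    simpa [orbitPoly] using this
  · intro h
    rw [orbitPoly, ← Finset.prod_pow]
    refine Finset.prod_dvd_of_coprime ?_ fun j _ => conj_pow_dvd h j
    intro a ha b hb hab
    refine IsCoprime.pow (isCoprime_X_sub_C_of_isUnit_sub ?_)
    rw [isUnit_iff_ne_zero, sub_ne_zero]
    intro hh
    apply hab
    have := Function.iterate_injOn_Iio_minimalPeriod (f := fun y : K => y ^ q) (x := x)
    refine this ?_ ?_ ?_
    · simpa [← hd] using ha
    · simpa [← hd] using hb
    · simpa only [frob_iterate] using hh

lemma charPoly_dvd_iff {f : F[X]} {k : ℕ} {x : K} (hx : x ^ q ^ k = x) :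
    charPoly F k x ∣ f ↔ orbitPoly F k x ∣ f.map (algebraMap F K) := by
  rw [← charPoly_map hx, Polynomial.map_dvd_map' (algebraMap F K)]

lemma isPeriodicPt_iff {k : ℕ} {x : K} :
    Function.IsPeriodicPt (fun y : K => y ^ q) k x ↔ x ^ q ^ k = x := by
  rw [Function.IsPeriodicPt, Function.IsFixedPt, frob_iterate]

/-- The multiplicity of a root `x` of `f` is the number of finite extensions containing `x`
in which its characteristic polynomial divides `f`. -/
lemma card_charPoly_dvd {n : ℕ} {f : F[X]} (hf : f ∈ monics F n) {x : K}
    (hx : x ∈ (f.map (algebraMap F K)).roots)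
    [DecidablePred fun k => x ^ q ^ k = x ∧ charPoly F k x ∣ f] :
    #{k ∈ Icc 1 n | x ^ q ^ k = x ∧ charPoly F k x ∣ f}
      = (f.map (algebraMap F K)).rootMultiplicity x := by
  obtain ⟨hfm, hfd⟩ := mem_monics.mp hf
  set d := Function.minimalPeriod (fun y : K => y ^ q) x with hd
  set m := (f.map (algebraMap F K)).rootMultiplicity x with hm
  have hd0 : 0 < d := by
    have hroot : ∀ j, x ^ q ^ j ∈ (f.map (algebraMap F K)).rootSet K := by
      intro j
      have h1 : (X - C x) ^ 1 ∣ f.map (algebraMap F K) := by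
        rw [pow_one]; exact dvd_iff_isRoot.mpr (isRoot_of_mem_roots hx)
      have := conj_pow_dvd h1 j
      rw [pow_one, dvd_iff_isRoot] at this
      rw [mem_rootSet]
      exact ⟨Polynomial.map_ne_zero hfm.ne_zero, by simpa using this⟩
    obtain ⟨a, b, hab, he⟩ := Finite.exists_ne_map_eq_of_infinite
      (fun j : ℕ => (⟨_, hroot j⟩ : (f.map (algebraMap F K)).rootSet K))
    simp only [Subtype.mk.injEq, ← frob_iterate] at he
    wlog hlt : b < a generalizing a b
    · exact this b a hab.symm he.symm (by omega)
    have := Function.iterate_cancel frob_injective he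
    exact Function.minimalPeriod_pos_of_mem_periodicPts ⟨a - b, by omega, this⟩
  have hxd : x ^ q ^ d = x := isPeriodicPt_iff.mp (Function.isPeriodicPt_minimalPeriod _ _)
  -- The element lies in the extension of degree `k` exactly when `k` is a multiple of the minimal
  -- period `d`, and its characteristic polynomial there is then a power of the minimal polynomial.
  have himg : {k ∈ Icc 1 n | x ^ q ^ k = x ∧ charPoly F k x ∣ f} = (Icc 1 m).image (d * ·) := by
    ext k
    simp only [mem_filter, mem_Icc, mem_image]
    constructor
    · rintro ⟨⟨h1, h2⟩, h3, h4⟩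
      obtain ⟨i, rfl⟩ := (isPeriodicPt_iff.mpr h3).minimalPeriod_dvd
      rw [← hd] at h1 h2 h3 h4 ⊢
      rw [charPoly_dvd_iff h3, orbitPoly_mul hxd, orbitPoly_pow_dvd_iff hfm.ne_zero hd hd0] at h4
      exact ⟨i, ⟨Nat.pos_of_mul_pos_left h1, h4⟩, rfl⟩
    · rintro ⟨i, ⟨h1, h2⟩, rfl⟩
      have h3 : x ^ q ^ (d * i) = x :=
        isPeriodicPt_iff.mp ((Function.isPeriodicPt_minimalPeriod _ _).mul_const i)
      have h4 := (orbitPoly_pow_dvd_iff hfm.ne_zero hd hd0 i).mpr h2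
      rw [← orbitPoly_mul hxd] at h4
      refine ⟨⟨Nat.mul_pos hd0 h1, ?_⟩, h3, (charPoly_dvd_iff h3).mpr h4⟩
      have := natDegree_le_of_dvd h4 (Polynomial.map_ne_zero hfm.ne_zero)
      rwa [orbitPoly_natDegree, natDegree_map, hfd] at this
  rw [himg, Finset.card_image_of_injective _ fun a b h => Nat.eq_of_mul_eq_mul_left hd0 h]
  simp

open Classical in
/-- Every monic `f` of degree `n` is divisible by exactly `n` characteristic polynomials of
elements of extensions of degree at most `n`. -/
lemma sum_card_charPoly_dvd [IsAlgClosed K] {n : ℕ} {f : F[X]} (hf : f ∈ monics F n) :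
    ∑ k ∈ Icc 1 n, #{x ∈ fixedPts F K k | charPoly F k x ∣ f} = n := by
  obtain ⟨hfm, hfd⟩ := mem_monics.mp hf
  set g := f.map (algebraMap F K) with hg
  have hg0 : g ≠ 0 := Polynomial.map_ne_zero hfm.ne_zero
  have h1 : ∀ k ∈ Icc 1 n, #{x ∈ fixedPts F K k | charPoly F k x ∣ f}
      = #{x ∈ g.roots.toFinset | x ^ q ^ k = x ∧ charPoly F k x ∣ f} := by
    intro k hk
    rw [mem_Icc] at hk
    congr 1
    ext x
    simp only [mem_filter, mem_fixedPts hk.1, Multiset.mem_toFinset]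
    refine ⟨fun h => ⟨?_, h⟩, fun h => h.2⟩
    rw [mem_roots hg0, ← dvd_iff_isRoot]
    refine dvd_trans ?_ ((charPoly_dvd_iff h.1).mp h.2)
    have := Finset.dvd_prod_of_mem (fun i => X - C (x ^ q ^ i)) (Finset.mem_range.mpr hk.1)
    simpa [orbitPoly] using this
  rw [Finset.sum_congr rfl h1]
  have h2 := Finset.sum_card_bipartiteAbove_eq_sum_card_bipartiteBelow (s := Icc 1 n)
    (t := g.roots.toFinset) (fun k x => x ^ q ^ k = x ∧ charPoly F k x ∣ f)
  simp only [Finset.bipartiteAbove, Finset.bipartiteBelow] at h2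
  rw [h2]
  have h3 : ∀ x ∈ g.roots.toFinset,
      #{k ∈ Icc 1 n | x ^ q ^ k = x ∧ charPoly F k x ∣ f} = g.roots.count x := by
    intro x hx
    rw [count_roots]
    exact card_charPoly_dvd hf (Multiset.mem_toFinset.mp hx)
  rw [Finset.sum_congr rfl h3, Multiset.toFinset_sum_count_eq,
    (splits_iff_card_roots.mp (IsAlgClosed.splits g)), natDegree_map, hfd]

/-- Newton's identities for the coefficients of the `L`-series of a completely multiplicative
function `w` on monic polynomials, the logarithmic derivative of the Euler product. -/
lemma newton_recursion [IsAlgClosed K] {w : F[X] → ℂ}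
    (hw : ∀ f g : F[X], f.Monic → g.Monic → w (f * g) = w f * w g) (n : ℕ) :
    (n : ℂ) * ∑ f ∈ monics F n, w f
      = ∑ k ∈ Icc 1 n, (∑ x ∈ fixedPts F K k, w (charPoly F k x)) * ∑ h ∈ monics F (n - k), w h := by
  classical
  calc (n : ℂ) * ∑ f ∈ monics F n, w f
      = ∑ f ∈ monics F n, ∑ k ∈ Icc 1 n, ∑ x ∈ fixedPts F K k,
          if charPoly F k x ∣ f then w f else 0 := by
        rw [Finset.mul_sum]
        refine Finset.sum_congr rfl fun f hf => ?_
        have h := congrArg (Nat.cast (R := ℂ)) (sum_card_charPoly_dvd (K := K) hf)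
        push_cast at h
        rw [← h, Finset.sum_mul]
        refine Finset.sum_congr rfl fun k _ => ?_
        rw [← Finset.sum_filter, Finset.sum_const, nsmul_eq_mul]
    _ = ∑ k ∈ Icc 1 n, ∑ x ∈ fixedPts F K k, ∑ f ∈ monics F n,
          if charPoly F k x ∣ f then w f else 0 := by
        rw [Finset.sum_comm]
        exact Finset.sum_congr rfl fun k _ => Finset.sum_comm
    _ = _ := by
        refine Finset.sum_congr rfl fun k hk => ?_
        rw [mem_Icc] at hk
        rw [Finset.sum_mul]
        refine Finset.sum_congr rfl fun x hx => ?_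
        have hx := (mem_fixedPts hk.1).mp hx
        rw [← Finset.sum_filter, sum_monics_dvd hk.2 (charPoly_mem hx), Finset.mul_sum]
        exact Finset.sum_congr rfl fun h hh =>
          hw _ _ (mem_monics.mp (charPoly_mem hx)).1 (mem_monics.mp hh).1

end Orbits

/-! ### The Hasse–Davenport product formula -/

section LFunctions

variable {F : Type*} [Field F] [Fintype F]

local notation "q" => Fintype.card F

/-- The completely multiplicative function `f ↦ ρ(∏ α) ψ(∑ α)` of a monic polynomial with
roots `α`, whose `L`-series is `1 + g(ρ) u`. -/
noncomputable def weight (ρ : MulChar F ℂ) (ψ : AddChar F ℂ) (f : F[X]) : ℂ :=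
  ρ (rootProd f) * ψ (rootSum f)

/-- The pullback `f ↦ ρ(∏ α⁵) ψ(∑ α⁵)` of `weight` along the fifth power map. -/
noncomputable def weight5 (ρ : MulChar F ℂ) (ψ : AddChar F ℂ) (f : F[X]) : ℂ :=
  ρ (rootProd f) ^ 5 * ψ (rootSum5 f)

variable (ρ : MulChar F ℂ) (ψ : AddChar F ℂ)

lemma weight_mul (f g : F[X]) (hf : f.Monic) (hg : g.Monic) :
    weight ρ ψ (f * g) = weight ρ ψ f * weight ρ ψ g := by
  simp only [weight, rootProd_mul hf hg, rootSum_mul hf hg, map_mul, AddChar.map_add_eq_mul]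
  ring

lemma weight5_mul (f g : F[X]) (hf : f.Monic) (hg : g.Monic) :
    weight5 ρ ψ (f * g) = weight5 ρ ψ f * weight5 ρ ψ g := by
  simp only [weight5, rootProd_mul hf hg, rootSum5_mul hf hg, map_mul, AddChar.map_add_eq_mul]
  ring

lemma sum_weight_zero : ∑ f ∈ monics F 0, weight ρ ψ f = 1 := by
  have h := rootProd_prod (∅ : Finset F) id
  have h' := rootSum_prod (∅ : Finset F) id
  simp only [Finset.prod_empty, Finset.sum_empty] at h h'
  simp [monics_zero, weight, h, h']

lemma sum_weight5_zero : ∑ f ∈ monics F 0, weight5 ρ ψ f = 1 := by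
  have h := rootProd_prod (∅ : Finset F) id
  have h' := rootSum5_prod (∅ : Finset F) id
  simp only [Finset.prod_empty, Finset.sum_empty] at h h'
  simp [monics_zero, weight5, h, h']

lemma sum_weight_one : ∑ f ∈ monics F 1, weight ρ ψ f = gaussSum ρ ψ := by
  rw [gaussSum]
  symm
  refine Finset.sum_bij (fun a _ => X - C a) ?_ ?_ ?_ ?_
  · intro a _
    exact mem_monics.mpr ⟨monic_X_sub_C a, natDegree_X_sub_C a⟩
  · intro a _ b _ h
    simpa using h
  · intro f hf
    obtain ⟨hm, hd⟩ := mem_monics.mp hf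
    refine ⟨-f.coeff 0, mem_univ _, ?_⟩
    conv_rhs => rw [hm.as_sum, hd]
    simp
  · intro a _
    simp [weight]

lemma reverse_coeff_of_le {f : F[X]} {n i : ℕ} (hd : f.natDegree = n) (hi : i ≤ n) :
    f.reverse.coeff i = f.coeff (n - i) := by
  rw [coeff_reverse, hd, revAt_le hi]

/-- In degree at least two the second and the last coefficient are independent, so that
summing `ψ` over the former gives zero. -/
lemma sum_weight_of_two_le (hψ : ψ ≠ 1) {n : ℕ} (hn : 2 ≤ n) :
    ∑ f ∈ monics F n, weight ρ ψ f = 0 := by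
  obtain ⟨b, hb⟩ := AddChar.ne_one_iff.mp hψ
  -- Adding `-b X ^ (n - 1)` shifts the sum of the roots by `b` and fixes their product.
  have hdeg : (C (-b) * X ^ (n - 1) : F[X]).degree < n :=
    (degree_C_mul_X_pow_le _ _).trans_lt (by exact_mod_cast (by omega : n - 1 < n))
  have h := sum_monics_add hdeg (weight ρ ψ)
  have h2 : ∀ f ∈ monics F n, weight ρ ψ (f + C (-b) * X ^ (n - 1)) = ψ b * weight ρ ψ f := by
    intro f hf
    obtain ⟨hm, hd⟩ := mem_monics.mp hf
    have hlt : (C (-b) * X ^ (n - 1) : F[X]).degree < f.degree := by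
      rw [degree_eq_natDegree hm.ne_zero, hd]; exact hdeg
    have hd' : (f + C (-b) * X ^ (n - 1)).natDegree = n := by
      rw [natDegree_add_eq_left_of_degree_lt hlt, hd]
    have h1 : rootProd (f + C (-b) * X ^ (n - 1)) = rootProd f := by
      simp only [rootProd, hd, hd', coeff_add, coeff_C_mul_X_pow]
      rw [if_neg (by omega), add_zero]
    have h3 : rootSum (f + C (-b) * X ^ (n - 1)) = b + rootSum f := by
      rw [rootSum, rootSum, reverse_coeff_of_le hd' (by omega), reverse_coeff_of_le hd (by omega),
        coeff_add, coeff_C_mul_X_pow, if_pos rfl]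
      ring
    rw [weight, weight, h1, h3, AddChar.map_add_eq_mul]
    ring
  rw [Finset.sum_congr rfl h2, ← Finset.mul_sum] at h
  have h4 : (ψ b - 1) * ∑ f ∈ monics F n, weight ρ ψ f = 0 := by linear_combination h
  exact (mul_eq_zero.mp h4).resolve_left (sub_ne_zero.mpr hb)

variable (K : Type*) [Field K] [Algebra F K]

/-- The exponential sum of `ρ` and `ψ` composed with norm and trace from the extension of
degree `k`. -/
noncomputable def powSum (k : ℕ) : ℂ := ∑ x ∈ fixedPts F K k, weight ρ ψ (charPoly F k x)

/-- The analogue of `powSum` for `weight5`: the argument `x` is replaced by its fifth power. -/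
noncomputable def powSum5 (k : ℕ) : ℂ := ∑ x ∈ fixedPts F K k, weight5 ρ ψ (charPoly F k x)

/-- The recursion `n cₙ = ∑ sₖ cₙ₋ₖ` written out for `n ≤ 5`. -/
lemma newton_explicit {c s : ℕ → ℂ} (h0 : c 0 = 1)
    (h : ∀ n : ℕ, (n : ℂ) * c n = ∑ k ∈ Icc 1 n, s k * c (n - k)) :
    c 1 = s 1 ∧ 2 * c 2 = s 1 * c 1 + s 2 ∧ 3 * c 3 = s 1 * c 2 + s 2 * c 1 + s 3 ∧
    4 * c 4 = s 1 * c 3 + s 2 * c 2 + s 3 * c 1 + s 4 ∧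
    5 * c 5 = s 1 * c 4 + s 2 * c 3 + s 3 * c 2 + s 4 * c 1 + s 5 := by
  have I1 : Icc 1 1 = ({1} : Finset ℕ) := rfl
  have I2 : Icc 1 2 = ({1, 2} : Finset ℕ) := rfl
  have I3 : Icc 1 3 = ({1, 2, 3} : Finset ℕ) := rfl
  have I4 : Icc 1 4 = ({1, 2, 3, 4} : Finset ℕ) := rfl
  have I5 : Icc 1 5 = ({1, 2, 3, 4, 5} : Finset ℕ) := rfl
  have r1 := h 1
  have r2 := h 2
  have r3 := h 3
  have r4 := h 4
  have r5 := h 5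
  rw [I1] at r1
  rw [I2] at r2
  rw [I3] at r3
  rw [I4] at r4
  rw [I5] at r5
  simp [h0] at r1 r2 r3 r4 r5
  refine ⟨r1, r2, ?_, ?_, ?_⟩ <;> [rw [r3]; rw [r4]; rw [r5]] <;> ring

/-- The Hasse–Davenport lifting relation, in degrees at most five. -/
lemma powSum_eq [IsAlgClosed K] (hψ : ψ ≠ 1) :
    powSum ρ ψ K 1 = gaussSum ρ ψ ∧ powSum ρ ψ K 2 = -gaussSum ρ ψ ^ 2 ∧
    powSum ρ ψ K 3 = gaussSum ρ ψ ^ 3 ∧ powSum ρ ψ K 4 = -gaussSum ρ ψ ^ 4 ∧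
    powSum ρ ψ K 5 = gaussSum ρ ψ ^ 5 := by
  obtain ⟨r1, r2, r3, r4, r5⟩ := newton_explicit (s := powSum ρ ψ K) (sum_weight_zero ρ ψ)
    (newton_recursion (K := K) (weight_mul ρ ψ))
  rw [sum_weight_of_two_le ρ ψ hψ (by norm_num)] at r2 r3 r4 r5
  rw [sum_weight_of_two_le ρ ψ hψ (by norm_num)] at r3 r4 r5
  rw [sum_weight_of_two_le ρ ψ hψ (by norm_num)] at r4 r5
  rw [sum_weight_of_two_le ρ ψ hψ (by norm_num)] at r5
  rw [sum_weight_one] at r1 r2 r3 r4 r5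
  have h2 : powSum ρ ψ K 2 = -gaussSum ρ ψ ^ 2 := by rw [← r1] at r2; linear_combination -r2
  have h3 : powSum ρ ψ K 3 = gaussSum ρ ψ ^ 3 := by rw [h2] at r3; linear_combination -r3
  have h4 : powSum ρ ψ K 4 = -gaussSum ρ ψ ^ 4 := by rw [h3] at r4; linear_combination -r4
  have h5 : powSum ρ ψ K 5 = gaussSum ρ ψ ^ 5 := by rw [h4] at r5; linear_combination -r5
  exact ⟨r1.symm, h2, h3, h4, h5⟩

lemma five_ne_zero_of_card {t : ℕ} (hq : q = 5 * t + 1) : (5 : F) ≠ 0 := by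
  intro h
  have := FiniteField.cast_card_eq_zero F
  rw [hq] at this
  push_cast at this
  rw [h] at this
  simp at this

lemma pow_card_eq {t : ℕ} (hq : q = 5 * t + 1) (k : ℕ) :
    q ^ k = 5 * (t * ∑ i ∈ range k, q ^ i) + 1 := by
  induction k with
  | zero => simp
  | succ k ih =>
    rw [Finset.sum_range_succ, pow_succ]
    calc q ^ k * q = q ^ k * (5 * t + 1) := by rw [← hq]
      _ = 5 * (t * q ^ k) + q ^ k := by ring
      _ = 5 * (t * q ^ k) + (5 * (t * ∑ i ∈ range k, q ^ i) + 1) := by rw [← ih]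
      _ = _ := by ring

variable {K} in
open Classical in
/-- Fifth roots inside the extension of degree `k` exist exactly when the norm is a fifth power
in `F`, and then there are five of them. -/
lemma card_fifth_roots [IsAlgClosed K] {t : ℕ} (hq : q = 5 * t + 1) {k : ℕ} (hk : 1 ≤ k)
    {x : K} (hx : x ^ q ^ k = x) (hx0 : x ≠ 0) :
    #{y ∈ fixedPts F K k | y ^ 5 = x} = if rootProd (charPoly F k x) ^ t = 1 then 5 else 0 := by
  have hiff : rootProd (charPoly F k x) ^ t = 1 ↔ x ^ (t * ∑ i ∈ range k, q ^ i) = 1 := by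
    rw [← (algebraMap F K).injective.eq_iff, map_pow, rootProd_charPoly hx, map_one, ← pow_mul,
      mul_comm]
  have hfix : ∀ y : K, y ^ 5 = x → (y ^ q ^ k = y ↔ x ^ (t * ∑ i ∈ range k, q ^ i) = 1) := by
    intro y hy
    have hy0 : y ≠ 0 := by
      rintro rfl
      exact hx0 (by rw [← hy]; simp)
    rw [pow_card_eq hq k, pow_succ, pow_mul, hy]
    exact mul_eq_right₀ hy0
  split_ifs with hc
  · rw [hiff] at hc
    have h5 : ((5 : ℕ) : K) ≠ 0 := by
      have := (map_ne_zero (algebraMap F K)).mpr (five_ne_zero_of_card hq)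
      rw [map_ofNat] at this
      exact_mod_cast this
    have : NeZero ((5 : ℕ) : K) := ⟨h5⟩
    obtain ⟨ζ, hζ⟩ := HasEnoughRootsOfUnity.exists_primitiveRoot K 5
    have hset : {y ∈ fixedPts F K k | y ^ 5 = x} = (nthRoots 5 x).toFinset := by
      ext y
      simp only [mem_filter, mem_fixedPts hk, Multiset.mem_toFinset,
        mem_nthRoots (show 0 < 5 by norm_num)]
      exact ⟨fun h => h.2, fun h => ⟨(hfix y h).mpr hc, h⟩⟩
    rw [hset, Multiset.toFinset_card_of_nodup (hζ.nthRoots_nodup hx0), hζ.card_nthRoots,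
      if_pos (IsAlgClosed.exists_pow_nat_eq x (by norm_num))]
  · rw [hiff] at hc
    rw [Finset.card_eq_zero, Finset.filter_eq_empty_iff]
    intro y hy h
    exact hc ((hfix y h).mp ((mem_fixedPts hk).mp hy))

variable {χ : MulChar F ℂ}

lemma sum_char_pow {t : ℕ} (hχ5 : χ ^ 5 = 1) (hχ : ∀ c : F, c ≠ 0 → (χ c = 1 ↔ c ^ t = 1))
    {c : F} (hc : c ≠ 0) [Decidable (c ^ t = 1)] :
    ∑ a ∈ range 5, χ c ^ a = if c ^ t = 1 then (5 : ℂ) else 0 := by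
  have h5 : χ c ^ 5 = 1 := by
    rw [← MulChar.pow_apply' χ (by norm_num), hχ5, MulChar.one_apply (isUnit_iff_ne_zero.mpr hc)]
  split_ifs with h
  · simp [(hχ c hc).mpr h]
  · have h1 : χ c - 1 ≠ 0 := sub_ne_zero.mpr fun hh => h ((hχ c hc).mp hh)
    have := geom_sum_mul (χ c) 5
    rw [h5, sub_self] at this
    exact (mul_eq_zero.mp this).resolve_right h1

/-- Grouping by fifth powers, the number of fifth roots is detected by the characters `χ ^ a`. -/
lemma powSum5_eq [IsAlgClosed K] {t : ℕ} (hq : q = 5 * t + 1) (hχ5 : χ ^ 5 = 1)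
    (hχ : ∀ c : F, c ≠ 0 → (χ c = 1 ↔ c ^ t = 1)) {k : ℕ} (hk : 1 ≤ k) :
    powSum5 ρ ψ K k = ∑ a ∈ range 5, powSum (ρ * χ ^ a) ψ K k := by
  classical
  have hmaps : ∀ y ∈ fixedPts F K k, y ^ 5 ∈ fixedPts F K k := by
    intro y hy
    rw [mem_fixedPts hk] at hy ⊢
    exact pow_five_fixed hy
  calc powSum5 ρ ψ K k
      = ∑ y ∈ fixedPts F K k, weight ρ ψ (charPoly F k (y ^ 5)) := by
        refine Finset.sum_congr rfl fun y hy => ?_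
        rw [mem_fixedPts hk] at hy
        rw [weight, weight5, rootProd_charPoly_pow_five hy, rootSum_charPoly_pow_five hy, map_pow]
    _ = ∑ x ∈ fixedPts F K k, ∑ y ∈ fixedPts F K k with y ^ 5 = x,
          weight ρ ψ (charPoly F k (y ^ 5)) := (Finset.sum_fiberwise_of_maps_to hmaps _).symm
    _ = ∑ x ∈ fixedPts F K k, ∑ a ∈ range 5, weight (ρ * χ ^ a) ψ (charPoly F k x) := by
        refine Finset.sum_congr rfl fun x hx => ?_
        rw [mem_fixedPts hk] at hx
        have h1 : ∑ y ∈ fixedPts F K k with y ^ 5 = x, weight ρ ψ (charPoly F k (y ^ 5))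
            = #{y ∈ fixedPts F K k | y ^ 5 = x} * weight ρ ψ (charPoly F k x) := by
          rw [← nsmul_eq_mul, ← Finset.sum_const]
          refine Finset.sum_congr rfl fun y hy => ?_
          rw [(mem_filter.mp hy).2]
        rw [h1]
        have hp := rootProd_charPoly hx
        rcases eq_or_ne x 0 with h0 | h0
        · have hz : rootProd (charPoly F k x) = 0 := by
            apply (algebraMap F K).injective
            rw [hp, map_zero, h0, zero_pow]
            have : q ^ 0 ≤ ∑ i ∈ range k, q ^ i :=
              Finset.single_le_sum (f := fun i => q ^ i) (fun _ _ => Nat.zero_le _)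
                (Finset.mem_range.mpr hk)
            rw [pow_zero] at this
            omega
          simp only [weight, hz, MulChar.map_zero, zero_mul, mul_zero, Finset.sum_const_zero]
        · have hz : rootProd (charPoly F k x) ≠ 0 := by
            intro h
            rw [h, map_zero] at hp
            exact pow_ne_zero _ h0 hp.symm
          rw [card_fifth_roots hq hk hx h0]
          have h2 := sum_char_pow hχ5 hχ hz
          push_cast
          rw [← h2, Finset.sum_mul]
          refine Finset.sum_congr rfl fun a _ => ?_
          rw [weight, weight, MulChar.mul_apply]
          have : (χ ^ a) (rootProd (charPoly F k x)) = χ (rootProd (charPoly F k x)) ^ a := by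
            have := MulChar.pow_apply_coe χ a (Units.mk0 _ hz)
            simpa using this
          rw [this]
          ring
    _ = _ := by rw [Finset.sum_comm]; rfl

/-- The `L`-series of `weight5` is the product of those of `weight (ρ * χ ^ a)`; here, the
coefficient in degree five. -/
lemma sum_weight5_five {t : ℕ} (hψ : ψ ≠ 1) (hq : q = 5 * t + 1) (hχ5 : χ ^ 5 = 1)
    (hχ : ∀ c : F, c ≠ 0 → (χ c = 1 ↔ c ^ t = 1)) :
    ∑ f ∈ monics F 5, weight5 ρ ψ f = ∏ a ∈ range 5, gaussSum (ρ * χ ^ a) ψ := by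
  set K := AlgebraicClosure F
  obtain ⟨r1, r2, r3, r4, r5⟩ := newton_explicit (s := powSum5 ρ ψ K) (sum_weight5_zero ρ ψ)
    (newton_recursion (K := K) (weight5_mul ρ ψ))
  have P := fun a => powSum_eq (ρ * χ ^ a) ψ K hψ
  have s1 := powSum5_eq ρ ψ K hq hχ5 hχ (show 1 ≤ 1 by norm_num)
  have s2 := powSum5_eq ρ ψ K hq hχ5 hχ (show 1 ≤ 2 by norm_num)
  have s3 := powSum5_eq ρ ψ K hq hχ5 hχ (show 1 ≤ 3 by norm_num)
  have s4 := powSum5_eq ρ ψ K hq hχ5 hχ (show 1 ≤ 4 by norm_num)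
  have s5 := powSum5_eq ρ ψ K hq hχ5 hχ (show 1 ≤ 5 by norm_num)
  simp only [fun a => (P a).1] at s1
  simp only [fun a => (P a).2.1] at s2
  simp only [fun a => (P a).2.2.1] at s3
  simp only [fun a => (P a).2.2.2.1] at s4
  simp only [fun a => (P a).2.2.2.2] at s5
  generalize (∑ f ∈ monics F 1, weight5 ρ ψ f) = c1 at *
  generalize (∑ f ∈ monics F 2, weight5 ρ ψ f) = c2 at *
  generalize (∑ f ∈ monics F 3, weight5 ρ ψ f) = c3 at *
  generalize (∑ f ∈ monics F 4, weight5 ρ ψ f) = c4 at *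
  generalize (∑ f ∈ monics F 5, weight5 ρ ψ f) = c5 at *
  simp only [Finset.sum_range_succ, Finset.sum_range_zero, zero_add] at s1 s2 s3 s4 s5
  simp only [Finset.prod_range_succ, Finset.prod_range_zero, one_mul]
  generalize gaussSum (ρ * χ ^ 0) ψ = g0 at *
  generalize gaussSum (ρ * χ ^ 1) ψ = g1 at *
  generalize gaussSum (ρ * χ ^ 2) ψ = g2 at *
  generalize gaussSum (ρ * χ ^ 3) ψ = g3 at *
  generalize gaussSum (ρ * χ ^ 4) ψ = g4 at *
  rw [s1] at r1
  rw [s1, s2, r1] at r2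
  have e2 : c2 = g0*g1 + g0*g2 + g0*g3 + g0*g4 + g1*g2 + g1*g3 + g1*g4 + g2*g3 + g2*g4 + g3*g4 := by
    linear_combination r2 / 2
  rw [s1, s2, s3, r1, e2] at r3
  have e3 : c3 = g0*g1*g2 + g0*g1*g3 + g0*g1*g4 + g0*g2*g3 + g0*g2*g4 + g0*g3*g4 + g1*g2*g3
      + g1*g2*g4 + g1*g3*g4 + g2*g3*g4 := by
    linear_combination r3 / 3
  rw [s1, s2, s3, s4, r1, e2, e3] at r4
  have e4 : c4 = g0*g1*g2*g3 + g0*g1*g2*g4 + g0*g1*g3*g4 + g0*g2*g3*g4 + g1*g2*g3*g4 := by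
    linear_combination r4 / 4
  rw [s1, s2, s3, s4, s5, r1, e2, e3, e4] at r5
  linear_combination r5 / 5

/-- In degree five the constant coefficient enters `rootSum5` only through the term `5 ∏ α`, so
that the sum of `weight5` splits off the Gauss sum of `ρ ^ 5`. -/
lemma sum_weight5_five' (h5 : (5 : F) ≠ 0) :
    ∑ f ∈ monics F 5, weight5 ρ ψ f =
      (∑ f ∈ monics F 5, open Classical in if rootProd f = 0 then ψ (rootSum5 f) else 0) *
        ((ρ ^ 5)⁻¹ 5 * gaussSum (ρ ^ 5) ψ) := by
  classical
  have hg : (ρ ^ 5)⁻¹ 5 * gaussSum (ρ ^ 5) ψ = ∑ r : F, ρ r ^ 5 * ψ (5 * r) := by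
    have := gaussSum_mulShift_eq (ρ ^ 5) ψ (Units.mk0 5 h5)
    rw [Units.val_mk0] at this
    rw [← this, gaussSum]
    exact Finset.sum_congr rfl fun r _ => by
      rw [MulChar.pow_apply' _ (by norm_num), AddChar.mulShift_apply]
  rw [hg, Finset.mul_sum]
  rw [← Finset.sum_fiberwise (monics F 5) rootProd]
  refine Finset.sum_congr rfl fun r _ => ?_
  rw [Finset.sum_filter]
  have hdeg : (C (-r) : F[X]).degree < (5 : ℕ) := degree_C_le.trans_lt (by norm_num)
  rw [← sum_monics_add hdeg, Finset.sum_mul]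
  refine Finset.sum_congr rfl fun f hf => ?_
  obtain ⟨hm, hd⟩ := mem_monics.mp hf
  have hd' : (f + C (-r)).natDegree = 5 := by rw [natDegree_add_C, hd]
  have h1 : rootProd (f + C (-r)) = rootProd f + r := by
    simp only [rootProd, hd, hd', coeff_add, coeff_C_zero]
    ring
  have h2 : rootSum5 (f + C (-r)) = rootSum5 f + 5 * r := by
    simp only [rootSum5, reverse_coeff_of_le hd' (show 1 ≤ 5 by norm_num),
      reverse_coeff_of_le hd' (show 2 ≤ 5 by norm_num),
      reverse_coeff_of_le hd' (show 3 ≤ 5 by norm_num),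
      reverse_coeff_of_le hd' (show 4 ≤ 5 by norm_num),
      reverse_coeff_of_le hd' (le_refl 5), reverse_coeff_of_le hd (show 1 ≤ 5 by norm_num),
      reverse_coeff_of_le hd (show 2 ≤ 5 by norm_num),
      reverse_coeff_of_le hd (show 3 ≤ 5 by norm_num),
      reverse_coeff_of_le hd (show 4 ≤ 5 by norm_num),
      reverse_coeff_of_le hd (le_refl 5), coeff_add, Nat.reduceSub, coeff_C_zero,
      coeff_C_of_ne_zero (show 4 ≠ 0 by norm_num), coeff_C_of_ne_zero (show 3 ≠ 0 by norm_num),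
      coeff_C_of_ne_zero (show 2 ≠ 0 by norm_num), coeff_C_of_ne_zero (show 1 ≠ 0 by norm_num)]
    ring
  rw [weight5, h1, h2]
  by_cases h : rootProd f = 0
  · rw [if_pos (by rw [h, zero_add]), if_pos h, h, zero_add, AddChar.map_add_eq_mul]
    ring
  · rw [if_neg (by simpa using h), if_neg h, zero_mul]

lemma gaussSum_mul_inv {χ : MulChar F ℂ} (hχ : χ ≠ 1) (hψ : ψ ≠ 1) :
    gaussSum χ ψ * gaussSum χ⁻¹ ψ = χ (-1) * q := by
  have h1 := gaussSum_mul_gaussSum_eq_card hχ (AddChar.IsPrimitive.of_ne_one hψ)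
  have h2 := mul_gaussSum_inv_eq_gaussSum χ⁻¹ ψ
  have h3 : χ⁻¹ (-1) = χ (-1) := by rw [MulChar.inv_apply', inv_neg, inv_one]
  rw [← h2, h3]
  linear_combination χ (-1) * h1

/-- The Hasse–Davenport product formula for the characters `χ ^ a` of order dividing five. -/
theorem hasse_davenport {t : ℕ} (hψ : ψ ≠ 1) (hq : q = 5 * t + 1) (hχ5 : χ ^ 5 = 1)
    (hχ : ∀ c : F, c ≠ 0 → (χ c = 1 ↔ c ^ t = 1)) (hχ1 : χ ≠ 1) :
    ∏ a ∈ range 5, gaussSum (ρ * χ ^ a) ψ = (q : ℂ) ^ 2 * ((ρ ^ 5)⁻¹ 5 * gaussSum (ρ ^ 5) ψ) := by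
  have h5 := five_ne_zero_of_card hq
  have A := fun ρ : MulChar F ℂ =>
    (sum_weight5_five ρ ψ hψ hq hχ5 hχ).symm.trans (sum_weight5_five' ρ ψ h5)
  have hneg : χ (-1) = 1 := by
    have e5 : χ (-1) ^ 5 = 1 := by
      rw [← MulChar.pow_apply' χ (by norm_num), hχ5,
        MulChar.one_apply (isUnit_iff_ne_zero.mpr (by simp))]
    have e2 : χ (-1) ^ 2 = 1 := by rw [← map_pow]; simp
    linear_combination e5 - (χ (-1) ^ 3 + χ (-1)) * e2
  have hinv1 : χ⁻¹ = χ ^ 4 := inv_eq_of_mul_eq_one_left (by rw [← pow_succ, hχ5])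
  have hinv2 : (χ ^ 2)⁻¹ = χ ^ 3 := inv_eq_of_mul_eq_one_left (by rw [← pow_add, hχ5])
  have h2 : χ ^ 2 ≠ 1 := by
    intro h
    apply hχ1
    calc χ = χ ^ 5 * ((χ ^ 2)⁻¹) ^ 2 := by rw [inv_pow, ← pow_mul]; group
      _ = 1 := by rw [hχ5, h]; simp
  have g1 := gaussSum_mul_inv ψ hχ1 hψ
  have g2 := gaussSum_mul_inv ψ h2 hψ
  rw [hinv1, hneg, one_mul] at g1
  rw [hinv2, MulChar.pow_apply' _ (by norm_num), hneg, one_pow, one_mul] at g2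
  -- The first factor in `A ρ` does not involve `ρ`; it is found from the case `ρ = 1`.
  have A1 := A 1
  simp only [Finset.prod_range_succ, Finset.prod_range_zero, one_mul, one_pow, pow_zero, pow_one,
    gaussSum_one_left hψ, inv_one, MulChar.one_apply (isUnit_iff_ne_zero.mpr h5)] at A1
  rw [A ρ]
  congr 1
  linear_combination A1 + gaussSum (χ ^ 2) ψ * gaussSum (χ ^ 3) ψ * g1 + q * g2

end LFunctions

/-! ### Powers of a generating character -/

section Transform

variable {F : Type*} [Field F] [Fintype F]

local notation "q" => Fintype.card F

variable {ψ : AddChar F ℂ} {T : MulChar F ℂ}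

lemma pow_apply_of_ne_zero (T : MulChar F ℂ) {a : F} (ha : a ≠ 0) (n : ℕ) :
    (T ^ n) a = T a ^ n := by
  simpa using MulChar.pow_apply_coe T n (Units.mk0 a ha)

/-- A generator of the character group is a faithful character. -/
lemma generator_apply_eq_one (hT : ∀ χ : MulChar F ℂ, ∃ k : ℕ, χ = T ^ k) {a : F} (ha : a ≠ 0)
    (h : T a = 1) : a = 1 := by
  by_contra h1
  obtain ⟨χ, hχ⟩ := MulChar.exists_apply_ne_one_of_hasEnoughRootsOfUnity F ℂ h1
  obtain ⟨k, rfl⟩ := hT χ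
  exact hχ (by rw [pow_apply_of_ne_zero T ha, h, one_pow])

lemma pow_card_sub_one_eq_one (χ : MulChar F ℂ) : χ ^ (q - 1) = 1 := by
  ext a
  rw [pow_apply_of_ne_zero χ a.ne_zero, ← map_pow, FiniteField.pow_card_sub_one_eq_one _ a.ne_zero,
    map_one, MulChar.one_apply a.isUnit]

lemma dvd_of_generator_pow_eq_one (hT : ∀ χ : MulChar F ℂ, ∃ k : ℕ, χ = T ^ k) {k : ℕ}
    (h : T ^ k = 1) : q - 1 ∣ k := by
  obtain ⟨u, hu⟩ := IsCyclic.exists_generator (α := Fˣ)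
  have h1 : (u : F) ^ k = 1 := by
    apply generator_apply_eq_one hT (pow_ne_zero _ u.ne_zero)
    rw [map_pow, ← pow_apply_of_ne_zero T u.ne_zero, h, MulChar.one_apply u.isUnit]
  have h2 : u ^ k = 1 := Units.ext (by simpa using h1)
  have h3 := orderOf_dvd_of_pow_eq_one h2
  classical
  rwa [orderOf_eq_card_of_forall_mem_zpowers hu, Nat.card_eq_fintype_card,
    Fintype.card_units] at h3

lemma generator_pow_inj (hT : ∀ χ : MulChar F ℂ, ∃ k : ℕ, χ = T ^ k) {i j : ℕ} (hi : i < q - 1)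
    (hj : j < q - 1) (h : T ^ i = T ^ j) : i = j := by
  wlog hij : i ≤ j generalizing i j
  · exact (this hj hi h.symm (by omega)).symm
  have h1 : T ^ (j - i) = 1 := by
    have h2 : T ^ i * T ^ (j - i) = T ^ i * 1 := by
      rw [← pow_add, Nat.add_sub_cancel' hij, mul_one, h]
    exact mul_left_cancel h2
  have := Nat.eq_zero_of_dvd_of_lt (dvd_of_generator_pow_eq_one hT h1) (by omega)
  omega

open Classical in
lemma sum_generator_pow (hT : ∀ χ : MulChar F ℂ, ∃ k : ℕ, χ = T ^ k) (a : F) :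
    ∑ j ∈ range (q - 1), (T ^ j) a = if a = 1 then (q : ℂ) - 1 else 0 := by
  have hq : 1 ≤ q := Fintype.card_pos
  rcases eq_or_ne a 0 with rfl | ha
  · simp [MulChar.map_zero]
  simp only [pow_apply_of_ne_zero T ha]
  split_ifs with h
  · rw [h]
    simp [Nat.cast_sub hq]
  · have h1 : T a - 1 ≠ 0 := sub_ne_zero.mpr fun hh => h (generator_apply_eq_one hT ha hh)
    have := geom_sum_mul (T a) (q - 1)
    rw [← pow_apply_of_ne_zero T ha, pow_card_sub_one_eq_one,
      MulChar.one_apply (isUnit_iff_ne_zero.mpr ha), sub_self] at this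
    exact (mul_eq_zero.mp this).resolve_right h1

lemma map_inv_apply (A : MulChar F ℂ) (a : F) : A a⁻¹ = (A a)⁻¹ := by
  rcases eq_or_ne a 0 with rfl | ha
  · simp [MulChar.map_zero]
  · refine eq_inv_of_mul_eq_one_left ?_
    rw [← map_mul, inv_mul_cancel₀ ha, map_one]

lemma inv_apply_eq_inv (A : MulChar F ℂ) (a : F) : A⁻¹ a = (A a)⁻¹ := by
  rw [MulChar.inv_apply', map_inv_apply]

/-! ### Jacobi sums and the hypergeometric function -/

/-- The substitution `u = r / (1 + r)` in the Jacobi sum `J(χ, χ⁻¹A⁻¹)`. -/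
lemma jacobiSum_inv_mul_inv (χ A : MulChar F ℂ) :
    jacobiSum χ (χ⁻¹ * A⁻¹) = ∑ r : F, χ r * A (1 + r) := by
  classical
  have h1 : jacobiSum χ (χ⁻¹ * A⁻¹) = ∑ u with u ≠ (1 : F), χ u * (χ⁻¹ * A⁻¹) (1 - u) := by
    rw [jacobiSum, Finset.sum_filter_of_ne]
    rintro u - hu rfl
    simp [MulChar.map_zero] at hu
  have h2 : ∑ r : F, χ r * A (1 + r) = ∑ r with r ≠ (-1 : F), χ r * A (1 + r) := by
    rw [Finset.sum_filter_of_ne]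
    rintro r - hr rfl
    simp [MulChar.map_zero] at hr
  rw [h1, h2]
  refine Finset.sum_bij' (fun u _ => u / (1 - u)) (fun r _ => r / (1 + r)) ?_ ?_ ?_ ?_ ?_
  all_goals
    intro u hu
    simp only [mem_filter, mem_univ, true_and] at hu ⊢
  · have : 1 - u ≠ 0 := sub_ne_zero.mpr hu.symm
    rw [ne_eq, div_eq_iff this]
    intro h
    have : (1 : F) = 0 := by linear_combination h
    exact one_ne_zero this
  · have : 1 + u ≠ 0 := fun h => hu (by linear_combination h)
    rw [ne_eq, div_eq_iff this]
    intro h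
    have : (1 : F) = 0 := by linear_combination -h
    exact one_ne_zero this
  · have : 1 - u ≠ 0 := sub_ne_zero.mpr hu.symm
    field_simp
    ring
  · have : 1 + u ≠ 0 := fun h => hu (by linear_combination h)
    field_simp
    ring
  · have h : 1 - u ≠ 0 := sub_ne_zero.mpr hu.symm
    have e : 1 + u / (1 - u) = (1 - u)⁻¹ := by
      field_simp
      ring
    rw [e, MulChar.mul_apply, inv_apply_eq_inv, inv_apply_eq_inv, div_eq_mul_inv, map_mul,
      map_inv_apply, map_inv_apply]
    ring

lemma gaussSum_mul_inv_mul_inv (ψ : AddChar F ℂ) (χ : MulChar F ℂ) {A : MulChar F ℂ}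
    (hA : A ≠ 1) : gaussSum χ ψ * gaussSum (χ⁻¹ * A⁻¹) ψ =
      gaussSum A⁻¹ ψ * ∑ r : F, χ r * A (1 + r) := by
  have e : χ * (χ⁻¹ * A⁻¹) = A⁻¹ := mul_inv_cancel_left _ _
  have := jacobiSum_mul_nontrivial (χ := χ) (φ := χ⁻¹ * A⁻¹) (by rwa [e, ne_eq, inv_eq_one]) ψ
  rw [← this, e, jacobiSum_inv_mul_inv]

/-- The Gauss sum expansion of `₂F₁(A, A⁻¹; ε | 1/μ)`: orthogonality turns the sum over the
characters `T ^ j` of a product of two Jacobi sums into a sum over the curve `r s μ = 1`. -/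
lemma sum_gaussSum_eq_greene2F1 (hψ : ψ ≠ 1) (hT : ∀ χ : MulChar F ℂ, ∃ k : ℕ, χ = T ^ k)
    {A : MulChar F ℂ} (hA : A ≠ 1) (hA1 : A (-1) = 1) {μ : F} (hμ : μ ≠ 0) :
    ∑ j ∈ range (q - 1), gaussSum (T ^ j) ψ ^ 2 * gaussSum ((T ^ j)⁻¹ * A⁻¹) ψ *
        gaussSum ((T ^ j)⁻¹ * A) ψ * (T ^ j) μ
      = ((q : ℂ) - 1) * (q ^ 2 * greene2F1 A A⁻¹ 1 (1 / μ)) := by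
  classical
  have hgg : gaussSum A ψ * gaussSum A⁻¹ ψ = q := by rw [gaussSum_mul_inv ψ hA hψ, hA1, one_mul]
  have hterm : ∀ j ∈ range (q - 1), gaussSum (T ^ j) ψ ^ 2 * gaussSum ((T ^ j)⁻¹ * A⁻¹) ψ *
        gaussSum ((T ^ j)⁻¹ * A) ψ * (T ^ j) μ =
      q * ∑ s : F, ∑ r : F, A⁻¹ (1 + s) * A (1 + r) * (T ^ j) (r * s * μ) := by
    intro j _
    have e1 := gaussSum_mul_inv_mul_inv ψ (T ^ j) hA
    have e2 := gaussSum_mul_inv_mul_inv ψ (T ^ j) (A := A⁻¹) (by rwa [ne_eq, inv_eq_one])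
    rw [inv_inv] at e2
    have e3 : ∑ s : F, ∑ r : F, A⁻¹ (1 + s) * A (1 + r) * (T ^ j) (r * s * μ) =
        (∑ r : F, (T ^ j) r * A (1 + r)) * (∑ s : F, (T ^ j) s * A⁻¹ (1 + s)) * (T ^ j) μ := by
      rw [Finset.sum_mul_sum, Finset.sum_comm, Finset.sum_mul]
      refine Finset.sum_congr rfl fun r _ => ?_
      rw [Finset.sum_mul]
      refine Finset.sum_congr rfl fun s _ => ?_
      rw [map_mul, map_mul]
      ring
    rw [e3, ← hgg]
    linear_combination gaussSum (T ^ j) ψ * gaussSum ((T ^ j)⁻¹ * A) ψ * (T ^ j) μ * e1 +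
      gaussSum A⁻¹ ψ * (∑ r : F, (T ^ j) r * A (1 + r)) * (T ^ j) μ * e2
  rw [Finset.sum_congr rfl hterm, ← Finset.mul_sum, Finset.sum_comm]
  have hs : ∀ s : F, ∑ j ∈ range (q - 1), ∑ r : F, A⁻¹ (1 + s) * A (1 + r) * (T ^ j) (r * s * μ) =
      if s = 0 then 0 else ((q : ℂ) - 1) * (A⁻¹ (1 + s) * A (1 + (s * μ)⁻¹)) := by
    intro s
    rw [Finset.sum_comm]
    simp only [← Finset.mul_sum, sum_generator_pow hT]
    split_ifs with h
    · simp [h]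
    · have hsm : s * μ ≠ 0 := mul_ne_zero h hμ
      rw [Finset.sum_eq_single (s * μ)⁻¹]
      · rw [if_pos (by rw [mul_assoc, inv_mul_cancel₀ hsm])]
        ring
      · intro r _ hr
        rw [if_neg, mul_zero]
        rw [mul_assoc]
        exact fun hh => hr (eq_inv_of_mul_eq_one_left hh)
      · simp
  rw [Finset.sum_congr rfl fun s _ => hs s]
  -- The substitution `s = -y / μ` produces the summand of Greene's function.
  have hμ' : -(1 / μ) ≠ 0 := neg_ne_zero.mpr (one_div_ne_zero hμ)
  rw [← Equiv.sum_comp (Equiv.mulLeft₀ _ hμ')]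
  have hq0 : (q : ℂ) ≠ 0 := Nat.cast_ne_zero.mpr Fintype.card_ne_zero
  rw [greene2F1, MulChar.one_apply (isUnit_iff_ne_zero.mpr (one_div_ne_zero hμ)), mul_one, mul_one,
    inv_apply_eq_inv, hA1, inv_one, inv_inv, one_mul]
  have : ∀ S : ℂ, ((q : ℂ) - 1) * (q ^ 2 * (1 / q * S)) = q * (((q : ℂ) - 1) * S) := by
    intro S
    field_simp
  rw [this, Finset.mul_sum univ _ ((q : ℂ) - 1)]
  congr 1
  refine Finset.sum_congr rfl fun y _ => ?_
  rw [Equiv.mulLeft₀_apply]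
  rcases eq_or_ne y 0 with rfl | hy
  · simp [MulChar.map_zero]
  · rw [if_neg (mul_ne_zero hμ' hy)]
    have e1 : 1 + (-(1 / μ) * y * μ)⁻¹ = -1 * (1 - y) * y⁻¹ := by
      field_simp
      ring
    have e2 : 1 + -(1 / μ) * y = 1 - 1 / μ * y := by ring
    rw [e1, e2, map_mul, map_mul, hA1, inv_apply_eq_inv, inv_apply_eq_inv, map_inv_apply]
    ring

lemma gaussSum_ne_zero (hψ : ψ ≠ 1) (χ : MulChar F ℂ) : gaussSum χ ψ ≠ 0 := by
  classical
  have hq0 : (q : ℂ) ≠ 0 := Nat.cast_ne_zero.mpr Fintype.card_ne_zero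
  rcases eq_or_ne χ 1 with rfl | h
  · rw [gaussSum_one_left hψ]
    simp
  · intro h0
    have := gaussSum_mul_inv ψ h hψ
    rw [h0, zero_mul] at this
    refine mul_ne_zero ?_ hq0 this.symm
    exact ((isUnit_one.neg : IsUnit (-1 : F)).map χ).ne_zero

open Classical in
/-- The reciprocal of a Gauss sum, including the trivial character. -/
lemma card_eq_mul_gaussSum (hψ : ψ ≠ 1) (χ : MulChar F ℂ) :
    (q : ℂ) = gaussSum χ ψ *
      (χ (-1) * gaussSum χ⁻¹ ψ - if χ = 1 then (q : ℂ) - 1 else 0) := by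
  split_ifs with h
  · rw [h, inv_one, gaussSum_one_left hψ,
      MulChar.one_apply (isUnit_one.neg : IsUnit (-1 : F))]
    ring
  · have e2 : χ (-1) ^ 2 = 1 := by rw [← map_pow]; simp
    linear_combination -χ (-1) * gaussSum_mul_inv ψ h hψ - q * e2

open Classical in
/-- A single summand, after the Hasse–Davenport product formula. The two Kronecker deltas come
from the characters for which one of the Gauss sums in the denominator is trivial. -/
lemma summand_eq {t : ℕ} (hψ : ψ ≠ 1) (hq : q = 5 * t + 1) {χ : MulChar F ℂ} (hχ5 : χ ^ 5 = 1)
    (hχ : ∀ c : F, c ≠ 0 → (χ c = 1 ↔ c ^ t = 1)) (hχ1 : χ ≠ 1) (P : MulChar F ℂ) {lam : F}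
    (hlam : lam ≠ 0) :
    gaussSum P ψ ^ 3 * gaussSum (P * χ) ψ * gaussSum (P * χ ^ 4) ψ / gaussSum (P ^ 5) ψ *
        (P ^ 5) (5 * lam) =
      gaussSum P ψ ^ 2 * gaussSum (P⁻¹ * χ ^ 3) ψ * gaussSum (P⁻¹ * χ ^ 2) ψ * P (lam ^ 5)
      - ((q : ℂ) - 1) * (if P = χ ^ 3 then gaussSum (χ ^ 3) ψ ^ 2 * gaussSum (χ ^ 4) ψ else 0)
      - ((q : ℂ) - 1) * (if P = χ ^ 2 then gaussSum (χ ^ 2) ψ ^ 2 * gaussSum χ ψ else 0) := by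
  have h5 := five_ne_zero_of_card hq
  have hneg : χ (-1) = 1 := by
    have e5 : χ (-1) ^ 5 = 1 := by
      rw [← MulChar.pow_apply' χ (by norm_num), hχ5,
        MulChar.one_apply (isUnit_iff_ne_zero.mpr (by simp))]
    have e2 : χ (-1) ^ 2 = 1 := by rw [← map_pow]; simp
    linear_combination e5 - (χ (-1) ^ 3 + χ (-1)) * e2
  have hm2 : (χ ^ 2) (-1) = 1 := by rw [pow_apply_of_ne_zero χ (by simp), hneg, one_pow]
  have hm3 : (χ ^ 3) (-1) = 1 := by rw [pow_apply_of_ne_zero χ (by simp), hneg, one_pow]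
  have hP2 : P (-1) * P (-1) = 1 := by rw [← map_mul]; simp
  have hinv2 : (χ ^ 2)⁻¹ = χ ^ 3 := inv_eq_of_mul_eq_one_left (by rw [← pow_add, hχ5])
  have hinv3 : (χ ^ 3)⁻¹ = χ ^ 2 := inv_eq_of_mul_eq_one_left (by rw [← pow_add, hχ5])
  have c2 : P * χ ^ 2 = 1 ↔ P = χ ^ 3 := by rw [mul_eq_one_iff_eq_inv, hinv2]
  have c3 : P * χ ^ 3 = 1 ↔ P = χ ^ 2 := by rw [mul_eq_one_iff_eq_inv, hinv3]
  have r2 := card_eq_mul_gaussSum hψ (P * χ ^ 2)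
  have r3 := card_eq_mul_gaussSum hψ (P * χ ^ 3)
  simp only [c2, mul_inv, hinv2, MulChar.mul_apply, hm2, mul_one] at r2
  simp only [c3, mul_inv, hinv3, MulChar.mul_apply, hm3, mul_one] at r3
  have hd := hasse_davenport P ψ hψ hq hχ5 hχ hχ1
  simp only [Finset.prod_range_succ, Finset.prod_range_zero, one_mul, pow_zero, mul_one,
    pow_one, inv_apply_eq_inv] at hd
  have n5 : (P ^ 5) 5 ≠ 0 := ((isUnit_iff_ne_zero.mpr h5).map (P ^ 5)).ne_zero
  have nG := gaussSum_ne_zero hψ (P ^ 5)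
  have n2 := gaussSum_ne_zero hψ (P * χ ^ 2)
  have n3 := gaussSum_ne_zero hψ (P * χ ^ 3)
  have hl : (P ^ 5) lam = P (lam ^ 5) := by rw [pow_apply_of_ne_zero P hlam, map_pow]
  rw [map_mul, hl]
  have hmain : gaussSum P ψ ^ 3 * gaussSum (P * χ) ψ * gaussSum (P * χ ^ 4) ψ /
        gaussSum (P ^ 5) ψ * ((P ^ 5) 5 * P (lam ^ 5)) =
      gaussSum P ψ ^ 2 *
        (P (-1) * gaussSum (P⁻¹ * χ ^ 3) ψ - if P = χ ^ 3 then (q : ℂ) - 1 else 0) *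
        (P (-1) * gaussSum (P⁻¹ * χ ^ 2) ψ - if P = χ ^ 2 then (q : ℂ) - 1 else 0) *
        P (lam ^ 5) := by
    generalize (P (-1) * gaussSum (P⁻¹ * χ ^ 3) ψ - if P = χ ^ 3 then (q : ℂ) - 1 else 0) = Y at *
    generalize (P (-1) * gaussSum (P⁻¹ * χ ^ 2) ψ - if P = χ ^ 2 then (q : ℂ) - 1 else 0) = Z at *
    field_simp at hd ⊢
    apply mul_right_cancel₀ (mul_ne_zero n2 n3)
    linear_combination gaussSum P ψ ^ 2 * P (lam ^ 5) * hd + gaussSum P ψ ^ 2 * gaussSum (P ^ 5) ψ *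
      P (lam ^ 5) * (q * r2 + gaussSum (P * χ ^ 2) ψ * Y * r3)
  rw [hmain]
  have hl5 : χ (lam ^ 5) = 1 := by
    rw [map_pow, ← pow_apply_of_ne_zero χ hlam, hχ5, MulChar.one_apply hlam.isUnit]
  have hlk : ∀ k, (χ ^ k) (lam ^ 5) = 1 := fun k => by
    rw [pow_apply_of_ne_zero χ (pow_ne_zero _ hlam), hl5, one_pow]
  have h23 : χ ^ 2 ≠ χ ^ 3 := by
    intro h
    rw [pow_succ χ 2] at h
    exact hχ1 (left_eq_mul.mp h)
  by_cases p3 : P = χ ^ 3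
  · have e : χ ^ 2 * χ ^ 2 = χ ^ 4 := by rw [← pow_add]
    rw [if_pos p3, if_pos p3, if_neg (by rw [p3]; exact h23.symm),
      if_neg (by rw [p3]; exact h23.symm), p3, hinv3, hlk, hm3, e]
    ring
  · by_cases p2 : P = χ ^ 2
    · have e : χ ^ 3 * χ ^ 3 = χ := by rw [← pow_add, pow_succ χ 5, hχ5, one_mul]
      rw [if_pos p2, if_pos p2, if_neg p3, if_neg p3, p2, hinv2, hlk, hm2, e]
      ring
    · rw [if_neg p2, if_neg p2, if_neg p3, if_neg p3]
      linear_combination gaussSum P ψ ^ 2 * gaussSum (P⁻¹ * χ ^ 3) ψ * gaussSum (P⁻¹ * χ ^ 2) ψ *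
        P (lam ^ 5) * hP2

end Transform

end HD

/-! ### The transformation of the character sum -/

theorem stmt18 {F : Type*} [Field F] [Fintype F]
    (ψ : AddChar F ℂ) (hψ : ψ ≠ 1)
    (q : ℕ) (hq : q = Fintype.card F) (hq5 : q % 5 = 1)
    (t : ℕ) (ht : t = (q - 1) / 5)
    (T : MulChar F ℂ) (hT : ∀ χ : MulChar F ℂ, ∃ k : ℕ, χ = T ^ k)
    (lam : F) (hlam0 : lam ≠ 0) (hlam : lam ^ 5 ≠ 1) :
    (1 / ((q : ℂ) - 1)) * ∑ j ∈ Finset.range (q - 1),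
        (gaussSum (T ^ j) ψ) ^ 3 * gaussSum (T ^ (t + j)) ψ *
            gaussSum (T ^ (4 * t + j)) ψ / gaussSum (T ^ (5 * j)) ψ *
          (T ^ (5 * j)) (5 * lam)
      = -(gaussSum (T ^ (2 * t)) ψ) ^ 2 * gaussSum (T ^ t) ψ
          - (gaussSum (T ^ (3 * t)) ψ) ^ 2 * gaussSum (T ^ (4 * t)) ψ
          + (q : ℂ) ^ 2 * greene2F1 (T ^ (2 * t)) (T ^ (3 * t)) 1 (1 / lam ^ 5) := by
  classical
  subst hq
  have hcard : Fintype.card F = 5 * t + 1 := by omega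
  have hq2 : 1 < Fintype.card F := Fintype.one_lt_card
  have ht0 : 0 < t := by omega
  have hsub : Fintype.card F - 1 = 5 * t := by omega
  have hq1 : (Fintype.card F : ℂ) - 1 ≠ 0 :=
    sub_ne_zero.mpr (by exact_mod_cast hq2.ne')
  have hTt : ∀ k, T ^ (k * t) = (T ^ t) ^ k := fun k => by rw [mul_comm, pow_mul]
  have hinj : ∀ k < 5, ∀ j < Fintype.card F - 1, T ^ j = (T ^ t) ^ k ↔ j = k * t := by
    intro k hk j hj
    rw [← hTt]
    have hkt : k * t < Fintype.card F - 1 := by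
      rw [hsub]; exact Nat.mul_lt_mul_of_pos_right hk ht0
    exact ⟨HD.generator_pow_inj hT hj hkt, fun h => by rw [h]⟩
  have hχ5 : (T ^ t) ^ 5 = 1 := by rw [← hTt, ← hsub, HD.pow_card_sub_one_eq_one]
  have hχ : ∀ c : F, c ≠ 0 → ((T ^ t) c = 1 ↔ c ^ t = 1) := by
    intro c hc
    rw [HD.pow_apply_of_ne_zero T hc, ← map_pow]
    exact ⟨HD.generator_apply_eq_one hT (pow_ne_zero _ hc), fun h => by rw [h, map_one]⟩
  have hne : ∀ k, 0 < k → k < 5 → (T ^ t) ^ k ≠ 1 := by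
    intro k hk0 hk h
    have := (hinj k hk 0 (by omega)).mp (by rw [h, pow_zero])
    have : 0 < k * t := Nat.mul_pos hk0 ht0
    omega
  have hχ1 : T ^ t ≠ 1 := by simpa using hne 1 (by norm_num) (by norm_num)
  have hterm : ∀ j ∈ Finset.range (Fintype.card F - 1), _ = _ := fun j _ =>
    HD.summand_eq hψ hcard hχ5 hχ hχ1 (T ^ j) hlam0
  have hA1 : ((T ^ t) ^ 2) (-1) = 1 := by
    rw [HD.pow_apply_of_ne_zero _ (by simp), ← map_pow]
    simp
  have hinv2 : ((T ^ t) ^ 2)⁻¹ = (T ^ t) ^ 3 :=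
    inv_eq_of_mul_eq_one_left (by rw [← pow_add, hχ5])
  have hmain := HD.sum_gaussSum_eq_greene2F1 hψ hT (hne 2 (by norm_num) (by norm_num)) hA1
    (pow_ne_zero 5 hlam0)
  rw [hinv2] at hmain
  have hdelta : ∀ k < 5, ∀ z : ℂ, ∑ j ∈ Finset.range (Fintype.card F - 1),
      (if T ^ j = (T ^ t) ^ k then z else 0) = z := by
    intro k hk z
    have hkt : k * t ∈ Finset.range (Fintype.card F - 1) := by
      rw [Finset.mem_range, hsub]; exact Nat.mul_lt_mul_of_pos_right hk ht0
    rw [Finset.sum_congr rfl fun j hj =>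
      if_congr (hinj k hk j (Finset.mem_range.mp hj)) rfl rfl, Finset.sum_ite_eq', if_pos hkt]
  have hsum : ∑ j ∈ Finset.range (Fintype.card F - 1),
        (gaussSum (T ^ j) ψ) ^ 3 * gaussSum (T ^ (t + j)) ψ *
            gaussSum (T ^ (4 * t + j)) ψ / gaussSum (T ^ (5 * j)) ψ *
          (T ^ (5 * j)) (5 * lam) =
      ∑ j ∈ Finset.range (Fintype.card F - 1),
        (gaussSum (T ^ j) ψ ^ 3 * gaussSum (T ^ j * T ^ t) ψ *
          gaussSum (T ^ j * (T ^ t) ^ 4) ψ / gaussSum ((T ^ j) ^ 5) ψ *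
            ((T ^ j) ^ 5) (5 * lam)) := by
    refine Finset.sum_congr rfl fun j _ => ?_
    rw [pow_add, pow_add, hTt 4, mul_comm (T ^ t), mul_comm ((T ^ t) ^ 4), mul_comm 5 j, pow_mul]
  rw [hsum, Finset.sum_congr rfl hterm, Finset.sum_sub_distrib, Finset.sum_sub_distrib,
    ← Finset.mul_sum, ← Finset.mul_sum, hdelta 3 (by norm_num), hdelta 2 (by norm_num), hmain,
    hTt 2, hTt 3, hTt 4]
  field_simp
  ring
end
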